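/- arXiv:0911.2884 — 7 statements merged into one kernel-verified Lean document; each statement's English description precedes it below -/
import Mathlib

section
/- Let I = (L(u,v)) ⊂ S = K[x_1,…,x_n] be a lexsegment edge ideal determined by u = x_1 x_i and v = x_j x_k with 2 ≤ j < k ≤ n and u >_lex v, and let I* be the Alexander dual of I. Then projdim_S(S/I*) = 3 if i ≥ j + 2 and x_n does not divide v (i.e., k ≠ n), and projdim_S(S/I*) = 2 otherwise. -/
/-!
The Alexander dual `I*` is the vertex cover ideal `⋂ (x_a, x_b)` of the graph whose edges are the
pairs in the lexsegment. Two facts about cover ideals carry the proof.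

* *Peeling* (`pdLT_peel`). If every edge of the graph `E'` obtained by deleting a vertex `p` meets
  the neighbourhood `N` of `p`, there is an exact sequence `0 → S → S × I(E') → I(E) → 0`, so for
  `d ≥ 1` the ideal `I(E)` has projective dimension at most `d` if and only if `I(E')` has.
* *Two stars* (`pdLT_two_stars`). If the graph consists of two stars with non-adjacent centres,
  neither set of leaves containing the other, its cover ideal has four generators and an explicit
  resolution of length two, whose last map does not split.

The edges of the lexsegment graph are those with smaller endpoint `x_1` (and larger endpoint at
least `x_i`), all those with smaller endpoint among `x_2, …, x_{j-1}`, and those from `x_j` to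
`x_{j+1}, …, x_k`. The vertices `x_2, x_3, …` can be peeled off in this order as long as the next
neighbourhood covers what remains. Outside the case `i ≥ j + 2`, `k ≠ n`, the vertex `x_1` can be
peeled at some point as well, everything gets deleted, and `pd I* ≤ 1`; equality holds since the
cover ideal of a nonempty graph is not projective (`not_projective_coverIdeal`). If `i ≥ j + 2` and
`k ≠ n`, peeling `x_2, …, x_{j-1}` leaves the stars of `x_1` and `x_j`, with leaves `x_i, …, x_n`
and `x_{j+1}, …, x_k`, so `pd I* = 2`. In all cases `pd (S/I*) = pd I* + 1`.

Projective dimension is handled through Mathlib's `HasProjectiveDimensionLT`, defined by vanishing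
of Ext; `projDim_eq` connects it to the length of projective resolutions.
-/

open MvPolynomial

/-- The variable `x_i` (1-based indexing) of `K[x_1,…,x_n]`. -/
noncomputable def xv (K : Type) [Field K] (n i : ℕ) : MvPolynomial (Fin n) K :=
  if h : i - 1 < n then MvPolynomial.X ⟨i - 1, h⟩ else 0

/-- `lexGE p q` : for sorted index pairs, the squarefree degree-2 monomial
`x_{p.1} x_{p.2}` is greater than or equal to `x_{q.1} x_{q.2}` in the
lexicographic order induced by `x_1 > x_2 > ⋯ > x_n`. -/
def lexGE (p q : ℕ × ℕ) : Prop := p.1 < q.1 ∨ (p.1 = q.1 ∧ p.2 ≤ q.2)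

/-- Strict lexicographic comparison of sorted index pairs. -/
def lexGT (p q : ℕ × ℕ) : Prop := p.1 < q.1 ∨ (p.1 = q.1 ∧ p.2 < q.2)

/-- Sorted index pairs in range `1,…,n`; these correspond exactly to the
squarefree monomials of degree 2 of `K[x_1,…,x_n]`. -/
def validPair (n : ℕ) (p : ℕ × ℕ) : Prop := 1 ≤ p.1 ∧ p.1 < p.2 ∧ p.2 ≤ n

/-- The lexsegment set `L(u,v)`, as a set of sorted index pairs. -/
def lexSegSet (n : ℕ) (u v : ℕ × ℕ) : Set (ℕ × ℕ) :=
  {w | validPair n w ∧ lexGE u w ∧ lexGE w v}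

/-- The lexsegment edge ideal `I = (L(u,v)) ⊆ K[x_1,…,x_n]`. -/
noncomputable def lexSegIdeal (K : Type) [Field K] (n : ℕ) (u v : ℕ × ℕ) :
    Ideal (MvPolynomial (Fin n) K) :=
  Ideal.span ((fun w : ℕ × ℕ => xv K n w.1 * xv K n w.2) '' lexSegSet n u v)

/-- The Alexander dual of the lexsegment edge ideal `(L(u,v))`: the intersection,
over the (minimal) monomial generators `x_p x_q` with `(p,q) ∈ L(u,v)`, of the
prime ideals `(x_p, x_q)`. -/
noncomputable def lexSegAlexDual (K : Type) [Field K] (n : ℕ) (u v : ℕ × ℕ) :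
    Ideal (MvPolynomial (Fin n) K) :=
  ⨅ w ∈ lexSegSet n u v, Ideal.span {xv K n w.1, xv K n w.2}

/-- The arithmetical rank of an ideal: the least `r` such that some `r` elements
of `J` generate an ideal with the same radical as `J`. -/
noncomputable def ara {R : Type} [CommRing R] (J : Ideal R) : ℕ :=
  sInf {r : ℕ | ∃ f : Fin r → R, (∀ t, f t ∈ J) ∧
    (Ideal.span (Set.range f)).radical = J.radical}

/-- The projective dimension of a module `M`: the least `d` admitting a projective
resolution vanishing in homological degrees `> d`. -/
noncomputable def projDim {R : Type} [CommRing R] (M : ModuleCat R) : ℕ :=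
  sInf {d : ℕ | ∃ P : CategoryTheory.ProjectiveResolution M,
    ∀ i : ℕ, d < i → CategoryTheory.Limits.IsZero (P.complex.X i)}

/-- The depth of `S/I` with respect to the graded maximal ideal `(x_1,…,x_n)`:
the longest length of a regular sequence on `S/I` consisting of elements of
`(x_1,…,x_n)`. -/
noncomputable def smDepth (K : Type) [Field K] (n : ℕ)
    (I : Ideal (MvPolynomial (Fin n) K)) : ℕ :=
  sSup {r : ℕ | ∃ rs : List (MvPolynomial (Fin n) K), rs.length = r ∧
    (∀ a ∈ rs, a ∈ Ideal.span
      (Set.range (MvPolynomial.X : Fin n → MvPolynomial (Fin n) K))) ∧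
    RingTheory.Sequence.IsRegular (MvPolynomial (Fin n) K ⧸ I) rs}

/-- The height of an ideal: the infimum of the heights of the primes containing it. -/
noncomputable def idealHeight {R : Type} [CommRing R] (I : Ideal R) : ℕ∞ :=
  ⨅ p ∈ {p : PrimeSpectrum R | I ≤ p.asIdeal}, Order.height p

/-- `m` is a monomial of `K[x_1,…,x_n]`. -/
def IsMonomial {K : Type} [Field K] {n : ℕ} (m : MvPolynomial (Fin n) K) : Prop :=
  ∃ s : Fin n →₀ ℕ, m = MvPolynomial.monomial s 1

/-- `m` is a squarefree monomial of `K[x_1,…,x_n]`. -/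
def IsSqFreeMonomial {K : Type} [Field K] {n : ℕ} (m : MvPolynomial (Fin n) K) : Prop :=
  ∃ t : Finset (Fin n), m = t.prod (fun i => MvPolynomial.X i)

/-- `m` is a minimal monomial generator of the monomial ideal `I`: a monomial of `I`
divisible by no monomial of `I` other than itself. -/
def IsMinimalMonomialGen {K : Type} [Field K] {n : ℕ}
    (I : Ideal (MvPolynomial (Fin n) K)) (m : MvPolynomial (Fin n) K) : Prop :=
  IsMonomial m ∧ m ∈ I ∧
    ∀ m', IsMonomial m' → m' ∈ I → m' ∣ m → m' = m

namespace LexSegProof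

/-! ### Projective dimension via resolutions and via Ext -/

section Resolutions

open CategoryTheory CategoryTheory.Limits

variable {R : Type} [CommRing R]

lemma hasProjectiveDimensionLT_of_resolution {M : ModuleCat.{0} R} {d : ℕ}
    (P : ProjectiveResolution M) (hP : ∀ i : ℕ, d < i → IsZero (P.complex.X i)) :
    HasProjectiveDimensionLT M (d + 1) := by
  let := HasExt.standard (ModuleCat.{0} R)
  rw [hasProjectiveDimensionLT_iff]
  intro i hi Y e
  obtain ⟨f, hf, rfl⟩ := P.extMk_surjective e (i + 1) rfl
  obtain rfl : f = 0 := (hP i (by omega)).eq_of_src _ _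
  simp

/-- Splicing: if `0 → X₁ → X₂ → X₃ → 0` is exact with `X₂` projective, a projective resolution of
`X₁` of length `d` extends to one of `X₃` of length `d + 1`. -/
lemma exists_resolution_splice {S : ShortComplex (ModuleCat.{0} R)} (hS : S.ShortExact)
    [Projective S.X₂] {d : ℕ}
    (h : ∃ P : ProjectiveResolution S.X₁, ∀ i : ℕ, d < i → IsZero (P.complex.X i)) :
    ∃ P : ProjectiveResolution S.X₃, ∀ i : ℕ, d + 1 < i → IsZero (P.complex.X i) := by
  obtain ⟨Q, hQ⟩ := h
  have := hS.mono_f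
  have := hS.epi_g
  obtain ⟨π₀, hπ₀, hepi, hex⟩ : ∃ (π₀ : Q.complex.X 0 ⟶ S.X₁) (w : Q.complex.d 1 0 ≫ π₀ = 0),
      Epi π₀ ∧ (ShortComplex.mk _ _ w).Exact :=
    ⟨Q.π.f 0, Q.complex_d_comp_π_f_zero, inferInstanceAs (Epi (Q.π.f 0)), Q.exact₀⟩
  have hw : (π₀ ≫ S.f) ≫ S.g = 0 := by simp
  let C := ChainComplex.augment Q.complex (X := S.X₂) (π₀ ≫ S.f) (by
    rw [← Category.assoc, hπ₀, zero_comp])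
  have hC0 : (ShortComplex.mk (C.d 1 0) S.g hw).Exact := by
    let α : ShortComplex.mk (C.d 1 0) S.g hw ⟶ S :=
      { τ₁ := π₀
        τ₂ := 𝟙 _
        τ₃ := 𝟙 _
        comm₁₂ := (Category.comp_id (π₀ ≫ S.f)).symm
        comm₂₃ := (Category.id_comp S.g).trans (Category.comp_id S.g).symm }
    have : Epi α.τ₁ := hepi
    have : IsIso α.τ₂ := inferInstanceAs (IsIso (𝟙 _))
    have : Mono α.τ₃ := inferInstanceAs (Mono (𝟙 _))
    exact (ShortComplex.exact_iff_of_epi_of_isIso_of_mono α).2 hS.exact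
  have hC1 : ∀ n, (ShortComplex.mk _ _ (C.d_comp_d (n + 2) (n + 1) n)).Exact := by
    intro n
    cases n with
    | zero =>
      let α : ShortComplex.mk (Q.complex.d 1 0) π₀ hπ₀ ⟶
          ShortComplex.mk _ _ (C.d_comp_d 2 1 0) :=
        { τ₁ := 𝟙 _
          τ₂ := 𝟙 _
          τ₃ := S.f
          comm₁₂ := (Category.id_comp _).trans (Category.comp_id _).symm
          comm₂₃ := Category.id_comp _ }
      have : Epi α.τ₁ := inferInstanceAs (Epi (𝟙 _))
      have : IsIso α.τ₂ := inferInstanceAs (IsIso (𝟙 _))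
      have : Mono α.τ₃ := inferInstanceAs (Mono S.f)
      exact (ShortComplex.exact_iff_of_epi_of_isIso_of_mono α).1 hex
    | succ n => exact Q.exact_succ n
  refine ⟨{ complex := C
            projective := ?_
            π := (ChainComplex.toSingle₀Equiv _ _).symm ⟨S.g, hw⟩
            quasiIso := ⟨fun n => ?_⟩ }, ?_⟩
  · rintro (_ | n)
    · exact inferInstanceAs (Projective S.X₂)
    · exact Q.projective n
  · cases n
    · rw [ChainComplex.quasiIsoAt₀_iff, ShortComplex.quasiIso_iff_of_zeros']
      · refine (ShortComplex.exact_and_epi_g_iff_of_iso ?_).2 ⟨hC0, inferInstanceAs (Epi S.g)⟩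
        exact ShortComplex.isoMk (Iso.refl _) (Iso.refl _) (Iso.refl _)
          ((Category.id_comp (C.d 1 0)).trans (Category.comp_id (C.d 1 0)).symm)
          ((Category.id_comp S.g).trans (Category.comp_id S.g).symm)
      all_goals rfl
    · rename_i n
      rw [quasiIsoAt_iff_exactAt']
      · rw [HomologicalComplex.exactAt_iff' _ (n + 1 + 1) (n + 1) n (by simp) (by simp)]
        exact hC1 n
      · apply ChainComplex.exactAt_succ_single_obj
  · rintro (_ | i) hi
    · omega
    · exact hQ i (by omega)

lemma exists_resolution_of_hasProjectiveDimensionLT (d : ℕ) :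
    ∀ (M : ModuleCat.{0} R), HasProjectiveDimensionLT M (d + 1) →
    ∃ P : ProjectiveResolution M, ∀ i : ℕ, d < i → IsZero (P.complex.X i) := by
  induction d with
  | zero =>
    intro M hM
    have : Projective M := projective_iff_hasProjectiveDimensionLT_one.2 hM
    refine ⟨ProjectiveResolution.self M, fun i hi => ?_⟩
    exact HomologicalComplex.isZero_single_obj_X _ _ _ _ (by omega)
  | succ d ih =>
    intro M hM
    let S : ShortComplex (ModuleCat.{0} R) :=
      ShortComplex.mk (kernel.ι (Projective.π M)) (Projective.π M) (kernel.condition _)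
    have hS : S.ShortExact :=
      { exact := ShortComplex.exact_kernel _
        mono_f := inferInstanceAs (Mono (kernel.ι (Projective.π M)))
        epi_g := inferInstanceAs (Epi (Projective.π M)) }
    have : Projective S.X₂ := inferInstanceAs (Projective (Projective.over M))
    exact exists_resolution_splice hS
      (ih _ ((hS.hasProjectiveDimensionLT_X₃_iff d this).1 hM))

/-- The least length of a projective resolution is determined by the vanishing of Ext. -/
lemma projDim_eq {M : ModuleCat.{0} R} {d : ℕ} (h : HasProjectiveDimensionLT M (d + 1))
    (h' : ¬ HasProjectiveDimensionLT M d) : projDim M = d := by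
  apply le_antisymm
  · exact Nat.sInf_le (exists_resolution_of_hasProjectiveDimensionLT d M h)
  · refine le_csInf ⟨d, exists_resolution_of_hasProjectiveDimensionLT d M h⟩ ?_
    rintro e ⟨P, hP⟩
    by_contra! hlt
    have := hasProjectiveDimensionLT_of_resolution P hP
    exact h' (hasProjectiveDimensionLT_of_ge M (e + 1) d hlt)

end Resolutions

/-! ### Projective dimension of modules in exact sequences -/

section Homological

open CategoryTheory

variable {R : Type} [CommRing R]

/-- `PdLT R M d`: the `R`-module `M` has projective dimension less than `d`. -/
abbrev PdLT (R : Type) [CommRing R] (M : Type) [AddCommGroup M] [Module R M] (d : ℕ) : Prop :=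
  HasProjectiveDimensionLT (ModuleCat.of R M) d

variable {A B C : Type} [AddCommGroup A] [AddCommGroup B] [AddCommGroup C]
  [Module R A] [Module R B] [Module R C]

lemma shortExact_of_linearMap (f : A →ₗ[R] B) (g : B →ₗ[R] C) (hf : Function.Injective f)
    (hfg : Function.Exact f g) (hg : Function.Surjective g) :
    (ModuleCat.shortComplexOfCompEqZero f g hfg.linearMap_comp_eq_zero).ShortExact :=
  ModuleCat.shortComplex_shortExact _ hfg hf hg

lemma pdLT_one_of_projective (h : Module.Projective R A) : PdLT R A 1 := by
  have := (IsProjective.iff_projective A).1 h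
  exact projective_iff_hasProjectiveDimensionLT_one.1 this

lemma projective_of_pdLT_one (h : PdLT R A 1) : Module.Projective R A :=
  (IsProjective.iff_projective A).2 (projective_iff_hasProjectiveDimensionLT_one.2 h)

lemma pdLT_mono {d e : ℕ} (hde : d ≤ e) (h : PdLT R A d) : PdLT R A e :=
  hasProjectiveDimensionLT_of_ge _ d e hde

lemma pdLT_prod {d : ℕ} (hA : PdLT R A d) (hB : PdLT R B d) : PdLT R (A × B) d :=
  (shortExact_of_linearMap (LinearMap.inl R A B) (LinearMap.snd R A B) LinearMap.inl_injective
    Function.Exact.inl_snd LinearMap.snd_surjective).hasProjectiveDimensionLT_X₂ d hA hB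

lemma pdLT_of_prod {d : ℕ} (h : PdLT R (A × B) d) : PdLT R B d :=
  Retract.hasProjectiveDimensionLT (Y := ModuleCat.of R (A × B))
    { i := ModuleCat.ofHom (LinearMap.inr R A B)
      r := ModuleCat.ofHom (LinearMap.snd R A B)
      retract := by ext x; rfl } d

lemma pdLT_quotient_iff (I : Ideal R) (d : ℕ) : PdLT R (R ⧸ I) (d + 2) ↔ PdLT R I (d + 1) := by
  have hS := shortExact_of_linearMap (Submodule.subtype I) (Submodule.mkQ I)
    (Submodule.injective_subtype I) (LinearMap.exact_subtype_mkQ I) (Submodule.mkQ_surjective I)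
  refine hS.hasProjectiveDimensionLT_X₃_iff d ?_
  exact (IsProjective.iff_projective R).1 inferInstance

end Homological

/-! ### Squarefree monomials and cover ideals -/

section Monomials

variable {K : Type} [Field K] {n : ℕ}

/-- The squarefree monomial `∏_{q ∈ N} x_q`. -/
noncomputable def mon (K : Type) [Field K] {n : ℕ} (N : Finset (Fin n)) : MvPolynomial (Fin n) K :=
  ∏ q ∈ N, X q

lemma mon_ne_zero (N : Finset (Fin n)) : mon K N ≠ 0 :=
  Finset.prod_ne_zero_iff.2 fun q _ => X_ne_zero q

lemma X_dvd_mon {N : Finset (Fin n)} {p : Fin n} :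
    (X p : MvPolynomial (Fin n) K) ∣ mon K N ↔ p ∈ N := by
  refine ⟨fun h => ?_, fun h => Finset.dvd_prod_of_mem _ h⟩
  obtain ⟨q, hq, hpq⟩ := (X_prime.dvd_finsetProd_iff _).1 h
  rwa [X_dvd_X.1 hpq]

lemma mon_dvd {N : Finset (Fin n)} {f : MvPolynomial (Fin n) K} (h : ∀ q ∈ N, X q ∣ f) :
    mon K N ∣ f := by
  classical
  induction N using Finset.induction_on with
  | empty => simp [mon]
  | insert q N hq ih =>
    obtain ⟨g, rfl⟩ := ih fun r hr => h r (Finset.mem_insert_of_mem hr)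
    have h1 := (X_prime.dvd_or_dvd (h q (Finset.mem_insert_self q N))).resolve_left
      (fun h2 => hq (X_dvd_mon.1 h2))
    rw [mon, Finset.prod_insert hq, mul_comm]
    exact mul_dvd_mul_left _ h1

/-- The vertex cover ideal `⋂_{E a b} (x_a, x_b)` of the graph with edge relation `E`. The relation
need not be symmetric: an edge may be listed in one direction only. -/
noncomputable def coverIdeal (K : Type) [Field K] {n : ℕ} (E : Fin n → Fin n → Prop) :
    Ideal (MvPolynomial (Fin n) K) :=
  ⨅ (a : Fin n) (b : Fin n) (_ : E a b), Ideal.span {X a, X b}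

lemma mem_coverIdeal {E : Fin n → Fin n → Prop} {f : MvPolynomial (Fin n) K} :
    f ∈ coverIdeal K E ↔ ∀ a b, E a b → f ∈ Ideal.span {(X a : MvPolynomial (Fin n) K), X b} := by
  simp only [coverIdeal, Ideal.mem_iInf]

lemma mem_span_pair_iff {a b : Fin n} {f : MvPolynomial (Fin n) K} :
    f ∈ Ideal.span {(X a : MvPolynomial (Fin n) K), X b} ↔
      ∀ s ∈ f.support, s a ≠ 0 ∨ s b ≠ 0 := by
  have := mem_ideal_span_X_image (R := K) (s := {a, b}) (x := f)
  rw [Set.image_pair] at this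
  simpa using this

/-- Membership in a cover ideal is decided monomial by monomial: the support of each exponent vector
has to be a vertex cover. -/
lemma mem_coverIdeal_iff {E : Fin n → Fin n → Prop} {f : MvPolynomial (Fin n) K} :
    f ∈ coverIdeal K E ↔ ∀ s ∈ f.support, ∀ a b, E a b → s a ≠ 0 ∨ s b ≠ 0 := by
  simp only [mem_coverIdeal, mem_span_pair_iff]
  exact ⟨fun h s hs a b hab => h a b hab s hs, fun h a b hab s hs => h s hs a b hab⟩

/-- A cover ideal is contained in any ideal that contains all its monomials. -/
lemma coverIdeal_le {E : Fin n → Fin n → Prop} {J : Ideal (MvPolynomial (Fin n) K)}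
    (h : ∀ s : Fin n →₀ ℕ, (∀ a b, E a b → s a ≠ 0 ∨ s b ≠ 0) → monomial s 1 ∈ J) :
    coverIdeal K E ≤ J := by
  intro f hf
  rw [mem_coverIdeal_iff] at hf
  rw [f.as_sum]
  refine Ideal.sum_mem _ fun s hs => ?_
  have := J.mul_mem_left (C (coeff s f)) (h s (hf s hs))
  rwa [C_mul_monomial, mul_one] at this

lemma monomial_mem_coverIdeal {E : Fin n → Fin n → Prop} {s : Fin n →₀ ℕ}
    (h : ∀ a b, E a b → s a ≠ 0 ∨ s b ≠ 0) : monomial s (1 : K) ∈ coverIdeal K E := by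
  rw [mem_coverIdeal_iff]
  intro t ht
  rwa [Finset.mem_singleton.1 (support_monomial_subset ht)]

lemma mon_dvd_monomial {N : Finset (Fin n)} {s : Fin n →₀ ℕ} (h : ∀ q ∈ N, s q ≠ 0) :
    mon K N ∣ monomial s 1 :=
  mon_dvd fun q hq => X_dvd_monomial.2 (Or.inr (h q hq))

lemma mem_span_pair_of_X_dvd_left {a b : Fin n} {f : MvPolynomial (Fin n) K} (h : X a ∣ f) :
    f ∈ Ideal.span {(X a : MvPolynomial (Fin n) K), X b} :=
  Ideal.mem_of_dvd _ h (Ideal.subset_span (by simp))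

lemma mem_span_pair_of_X_dvd_right {a b : Fin n} {f : MvPolynomial (Fin n) K} (h : X b ∣ f) :
    f ∈ Ideal.span {(X a : MvPolynomial (Fin n) K), X b} :=
  Ideal.mem_of_dvd _ h (Ideal.subset_span (by simp))

lemma mon_mem_coverIdeal {E : Fin n → Fin n → Prop} {N : Finset (Fin n)}
    (h : ∀ a b, E a b → a ∈ N ∨ b ∈ N) : mon K N ∈ coverIdeal K E := by
  refine mem_coverIdeal.2 fun a b hab => ?_
  rcases h a b hab with h | h
  · exact mem_span_pair_of_X_dvd_left (X_dvd_mon.2 h)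
  · exact mem_span_pair_of_X_dvd_right (X_dvd_mon.2 h)

end Monomials

/-! ### Deleting a vertex -/

section Peeling

variable {K : Type} [Field K] {n : ℕ}

/-- If all vertices of `N` are neighbours of `p` in `E` and `E'` is a subgraph of `E` avoiding `p`,
the cover ideals satisfy `I(E) ⊆ (∏_{q ∈ N} x_q) + x_p I(E')`: a vertex cover of `E` not containing
`p` contains `N`, and one containing `p` still covers `E'` once `p` is removed. -/
lemma coverIdeal_peel {E E' : Fin n → Fin n → Prop} (p : Fin n) (N : Finset (Fin n))
    (hE' : ∀ a b, E' a b → E a b ∧ a ≠ p ∧ b ≠ p) (hN : ∀ b ∈ N, E p b)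
    {f : MvPolynomial (Fin n) K} (hf : f ∈ coverIdeal K E) :
    ∃ b, ∃ t ∈ coverIdeal K E', f = b * mon K N + X p * t := by
  classical
  have hle : coverIdeal K E ≤
      Ideal.span {mon K N} ⊔ Ideal.span {(X p : MvPolynomial (Fin n) K)} * coverIdeal K E' := by
    refine coverIdeal_le fun s hs => ?_
    by_cases hp : s p = 0
    · refine Ideal.mem_sup_left (Ideal.mem_span_singleton.2 (mon_dvd_monomial fun q hq => ?_))
      exact (hs p q (hN q hq)).resolve_left (fun h => h hp)
    · refine Ideal.mem_sup_right (Ideal.mem_span_singleton_mul.2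
        ⟨monomial (s - Finsupp.single p 1) 1, monomial_mem_coverIdeal fun a b hab => ?_, ?_⟩)
      · obtain ⟨h, ha, hb⟩ := hE' a b hab
        have := hs a b h
        simpa [Finsupp.single_apply, Ne.symm ha, Ne.symm hb] using this
      · rw [X, monomial_mul, one_mul, add_tsub_cancel_of_le]
        rw [Finsupp.single_le_iff]
        omega
  obtain ⟨y, hy, z, hz, rfl⟩ := Submodule.mem_sup.1 (hle hf)
  obtain ⟨b, rfl⟩ := Ideal.mem_span_singleton'.1 hy
  obtain ⟨t, ht, rfl⟩ := Ideal.mem_span_singleton_mul.1 hz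
  exact ⟨b, t, ht, rfl⟩

/-- Deleting a vertex `p` whose set of neighbours `N` covers the remaining graph does not affect
projective dimension bounds `≥ 1` of the cover ideal: there is an exact sequence
`0 → S → S × I(E') → I(E) → 0`, with maps `(x_p, -∏_N x_q)` and `(∏_N x_q, x_p)`. -/
lemma pdLT_peel {E E' : Fin n → Fin n → Prop} (p : Fin n) (N : Finset (Fin n)) (hpN : p ∉ N)
    (hE : ∀ a b, E a b → E' a b ∨ (a = p ∧ b ∈ N))
    (hE' : ∀ a b, E' a b → E a b ∧ a ≠ p ∧ b ≠ p ∧ (a ∈ N ∨ b ∈ N))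
    (hN : ∀ b ∈ N, E p b) (d : ℕ) :
    PdLT (MvPolynomial (Fin n) K) (coverIdeal K E) (d + 2) ↔
      PdLT (MvPolynomial (Fin n) K) (coverIdeal K E') (d + 2) := by
  set S := MvPolynomial (Fin n) K
  have hm : mon K N ∈ coverIdeal K E' := mon_mem_coverIdeal fun a b h => (hE' a b h).2.2.2
  have hmE : mon K N ∈ coverIdeal K E := mon_mem_coverIdeal fun a b h => by
    rcases hE a b h with h | ⟨-, h⟩
    · exact (hE' a b h).2.2.2
    · exact Or.inr h
  have hxE : ∀ t ∈ coverIdeal K E', (X p : S) * t ∈ coverIdeal K E := by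
    intro t ht
    refine mem_coverIdeal.2 fun a b hab => ?_
    rcases hE a b hab with h | ⟨rfl, -⟩
    · exact Ideal.mul_mem_left _ _ (mem_coverIdeal.1 ht a b h)
    · exact mem_span_pair_of_X_dvd_left (dvd_mul_right _ _)
  let φ : S →ₗ[S] S × coverIdeal K E' :=
    LinearMap.toSpanSingleton S _ ((X p : S), -(⟨mon K N, hm⟩ : coverIdeal K E'))
  let ψ : S × coverIdeal K E' →ₗ[S] coverIdeal K E :=
    LinearMap.coprod (LinearMap.toSpanSingleton S _ ⟨mon K N, hmE⟩)
      ((LinearMap.mulLeft S (X p : S)).restrict hxE)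
  have hφ : ∀ a, φ a = (a * X p, -(⟨a * mon K N, Ideal.mul_mem_left _ _ hm⟩ : coverIdeal K E')) := by
    intro a
    simp only [φ, LinearMap.toSpanSingleton_apply, Prod.smul_mk, smul_neg]
    rfl
  have hψ : ∀ (b : S) (t : coverIdeal K E'), (ψ (b, t) : S) = b * mon K N + X p * (t : S) := by
    intro b t
    simp [ψ]
    rfl
  have hinj : Function.Injective φ := by
    intro a b hab
    rw [hφ, hφ] at hab
    exact mul_right_cancel₀ (X_ne_zero p) (Prod.ext_iff.1 hab).1
  have hsurj : Function.Surjective ψ := by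
    rintro ⟨f, hf⟩
    obtain ⟨b, t, ht, h⟩ := coverIdeal_peel p N
      (fun a b h => ⟨(hE' a b h).1, (hE' a b h).2.1, (hE' a b h).2.2.1⟩) hN hf
    exact ⟨(b, ⟨t, ht⟩), Subtype.ext ((hψ _ _).trans h.symm)⟩
  have hex : Function.Exact φ ψ := by
    rintro ⟨b, t, ht⟩
    constructor
    · intro h
      have h1 : b * mon K N + X p * t = 0 := (hψ b ⟨t, ht⟩).symm.trans (congrArg Subtype.val h)
      have h2 : (X p : S) ∣ b * mon K N := ⟨-t, by linear_combination h1⟩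
      obtain ⟨c, rfl⟩ := (X_prime.dvd_or_dvd h2).resolve_right fun h => hpN (X_dvd_mon.1 h)
      refine ⟨c, ?_⟩
      rw [hφ]
      refine Prod.ext (mul_comm _ _) (Subtype.ext ?_)
      have h3 : (X p : S) * (c * mon K N + t) = 0 := by linear_combination h1
      have h4 := (mul_eq_zero.1 h3).resolve_left (X_ne_zero p)
      change -(c * mon K N) = t
      linear_combination -h4
    · rintro ⟨a, ha⟩
      rw [← ha, hφ]
      refine Subtype.ext ((hψ _ _).trans ?_)
      change a * X p * mon K N + X p * (-(a * mon K N)) = 0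
      ring
  have hS := shortExact_of_linearMap φ ψ hinj hex hsurj
  have hfree : PdLT S S 1 := pdLT_one_of_projective inferInstance
  constructor
  · intro h
    exact pdLT_of_prod (hS.hasProjectiveDimensionLT_X₂ (d + 2) (pdLT_mono (by omega) hfree) h)
  · intro h
    exact hS.hasProjectiveDimensionLT_X₃ (d + 1) (pdLT_mono (by omega) hfree)
      (pdLT_prod (pdLT_mono (by omega) hfree) h)

end Peeling

/-! ### Non-projectivity and the graph of two stars -/

section LowerBounds

variable {K : Type} [Field K] {n : ℕ}

/-- The cover ideal of a nonempty graph without loops is not projective: it contains the products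
of all variables but one, so every linear form on it maps `x_1 ⋯ x_n` to a multiple of `x_1 ⋯ x_n`,
and a dual basis would express `1` as an element of the ideal. -/
lemma not_projective_coverIdeal {E : Fin n → Fin n → Prop} (hE : ∃ a b, E a b)
    (hne : ∀ a b, E a b → a ≠ b) :
    ¬ Module.Projective (MvPolynomial (Fin n) K) (coverIdeal K E) := by
  intro hproj
  set S := MvPolynomial (Fin n) K
  obtain ⟨s, hs⟩ := Module.projective_def'.1 hproj
  have hu : mon K Finset.univ ∈ coverIdeal K E := mon_mem_coverIdeal fun a b _ => by simp
  have herase : ∀ c, mon K (Finset.univ.erase c) ∈ coverIdeal K E := fun c =>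
    mon_mem_coverIdeal fun a b hab => by
      have := hne a b hab
      simp only [Finset.mem_erase, Finset.mem_univ, and_true]
      by_contra! h
      exact this (h.1.trans h.2.symm)
  have hdvd : ∀ i, mon K Finset.univ ∣ s ⟨_, hu⟩ i := by
    refine fun i => mon_dvd fun c _ => ?_
    have h1 : (⟨_, hu⟩ : coverIdeal K E) = (X c : S) • ⟨_, herase c⟩ :=
      Subtype.ext (Finset.mul_prod_erase Finset.univ X (Finset.mem_univ c)).symm
    rw [h1, map_smul, Finsupp.smul_apply]
    exact dvd_mul_right _ _
  have h2 : ((Finsupp.linearCombination S id (s ⟨_, hu⟩) : coverIdeal K E) : S) =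
      mon K Finset.univ := congrArg Subtype.val (LinearMap.congr_fun hs ⟨_, hu⟩)
  have h3 : ((Finsupp.linearCombination S id (s ⟨_, hu⟩) : coverIdeal K E) : S) ∈
      Ideal.span {mon K Finset.univ} * coverIdeal K E := by
    rw [Finsupp.linearCombination_apply, Finsupp.sum, AddSubmonoidClass.coe_finsetSum]
    exact Ideal.sum_mem _ fun i _ =>
      Ideal.mul_mem_mul (Ideal.mem_span_singleton.2 (hdvd i)) i.2
  rw [h2] at h3
  obtain ⟨z, hz, hz1⟩ := Ideal.mem_span_singleton_mul.1 h3
  obtain rfl : z = 1 := mul_left_cancel₀ (mon_ne_zero _) (hz1.trans (mul_one _).symm)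
  obtain ⟨a, b, hab⟩ := hE
  have := mem_coverIdeal_iff.1 hz 0 (by simp) a b hab
  simp at this

/-- The free resolution `0 → S → S⁴ → S⁴ → B → 0` of `B = (xy, xgb, gay, gab)`, which for pairwise
coprime monomials is the intersection `(x, ga) ∩ (y, gb)`. The last differential `(a, -b, y, -x)`
has its entries in the kernel of a ring homomorphism `ε` to a field, so it does not split, and `B`
has projective dimension exactly two. The hypothesis `hreg` says that `y` is a nonzerodivisor
modulo `(x, a)`. -/
lemma pdLT_four_generated {S L : Type} [CommRing S] [IsDomain S] [Field L] (ε : S →+* L)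
    {x y g a b : S} (hx : Prime x) (hy : Prime y) (hyg : ¬ y ∣ g) (hyb : ¬ y ∣ b) (hya : ¬ y ∣ a)
    (hxg : ¬ x ∣ g) (hxa : ¬ x ∣ a)
    (hreg : ∀ w c d, y * w = x * c + a * d → ∃ c' d', w = x * c' + a * d')
    (εx : ε x = 0) (εy : ε y = 0) (εa : ε a = 0) (εb : ε b = 0)
    {B : Ideal S} (hB : B = Ideal.span {x * y, x * g * b, g * a * y, g * a * b}) :
    PdLT S B 3 ∧ ¬ PdLT S B 2 := by
  have hx0 : x ≠ 0 := hx.ne_zero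
  have hy0 : y ≠ 0 := hy.ne_zero
  have hmem : ∀ v : S × S × S × S, v.1 * (x * y) + v.2.1 * (x * g * b) + v.2.2.1 * (g * a * y) +
      v.2.2.2 * (g * a * b) ∈ B := by
    intro v
    rw [hB]
    refine Ideal.add_mem _ (Ideal.add_mem _ (Ideal.add_mem _ ?_ ?_) ?_) ?_ <;>
    exact Ideal.mul_mem_left _ _ (Ideal.subset_span (by simp))
  let d₀ : S × S × S × S →ₗ[S] B :=
    { toFun := fun v => ⟨_, hmem v⟩
      map_add' := fun v w => Subtype.ext (by simp; ring)
      map_smul' := fun c v => Subtype.ext (by simp; ring) }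
  have hd₀ : Function.Surjective d₀ := by
    rintro ⟨f, hf⟩
    rw [hB] at hf
    simp only [Ideal.mem_span_insert, Ideal.mem_span_singleton'] at hf
    obtain ⟨c₁, z₁, ⟨c₂, z₂, ⟨c₃, z₃, ⟨c₄, rfl⟩, rfl⟩, rfl⟩, rfl⟩ := hf
    refine ⟨(c₁, c₂, c₃, c₄), Subtype.ext ?_⟩
    change c₁ * (x * y) + c₂ * (x * g * b) + c₃ * (g * a * y) + c₄ * (g * a * b) = _
    ring
  let d₁' : S × S × S × S →ₗ[S] S × S × S × S :=
    { toFun := fun v => (g * b * v.1 + g * a * v.2.1, -y * v.1 + a * v.2.2.1,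
        -x * v.2.1 + b * v.2.2.2, -x * v.2.2.1 - y * v.2.2.2)
      map_add' := fun v w => by simp only [Prod.mk_add_mk, Prod.fst_add, Prod.snd_add]; ring_nf
      map_smul' := fun c v => by
        simp only [Prod.smul_mk, Prod.smul_fst, Prod.smul_snd, smul_eq_mul, RingHom.id_apply]
        ring_nf }
  let d₁ : S × S × S × S →ₗ[S] LinearMap.ker d₀ := d₁'.codRestrict _ (by
    rintro ⟨p, q, r, s⟩
    refine LinearMap.mem_ker.2 (Subtype.ext ?_)
    change (g * b * p + g * a * q) * (x * y) + (-y * p + a * r) * (x * g * b) +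
      (-x * q + b * s) * (g * a * y) + (-x * r - y * s) * (g * a * b) = 0
    ring)
  have hd₁ : Function.Surjective d₁ := by
    rintro ⟨⟨α, β, γ, δ⟩, hv⟩
    have h : α * (x * y) + β * (x * g * b) + γ * (g * a * y) + δ * (g * a * b) = 0 :=
      congrArg Subtype.val (LinearMap.mem_ker.1 hv)
    -- The relation between the generators is solved by cancelling `y`, `x`, `x` in turn.
    have h1 : y ∣ g * (b * (x * β + a * δ)) := ⟨-(α * x + γ * g * a), by linear_combination h⟩
    obtain ⟨w, hw⟩ := (hy.dvd_or_dvd ((hy.dvd_or_dvd h1).resolve_left hyg)).resolve_left hyb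
    have h2 : α * x + g * (a * γ + b * w) = 0 := by
      refine (mul_eq_zero.1 (?_ : y * (α * x + g * (a * γ + b * w)) = 0)).resolve_left hy0
      linear_combination h - g * b * hw
    have h3 : x ∣ g * (a * γ + b * w) := ⟨-α, by linear_combination h2⟩
    obtain ⟨z, hz⟩ := (hx.dvd_or_dvd h3).resolve_left hxg
    have hα : α = -g * z := by
      refine mul_left_cancel₀ hx0 ?_
      linear_combination h2 - g * hz
    obtain ⟨w₁, w₂, rfl⟩ := hreg w β δ hw.symm
    have h4 : x ∣ a * (y * w₂ - δ) := ⟨β - y * w₁, by linear_combination -hw⟩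
    obtain ⟨w₃, hw₃⟩ := (hx.dvd_or_dvd h4).resolve_left hxa
    have hβ : β = y * w₁ + a * w₃ := by
      refine mul_left_cancel₀ hx0 ?_
      linear_combination hw + a * hw₃
    have h5 : x ∣ a * (γ + b * w₂) := ⟨z - b * w₁, by linear_combination hz⟩
    obtain ⟨w₄, hw₄⟩ := (hx.dvd_or_dvd h5).resolve_left hxa
    have hz' : z = b * w₁ + a * w₄ := by
      refine mul_left_cancel₀ hx0 ?_
      linear_combination -hz + a * hw₄
    refine ⟨(-w₁, -w₄, w₃, -w₂), Subtype.ext ?_⟩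
    change (g * b * -w₁ + g * a * -w₄, -y * -w₁ + a * w₃, -x * -w₄ + b * -w₂,
      -x * w₃ - y * -w₂) = (α, β, γ, δ)
    refine Prod.ext ?_ (Prod.ext ?_ (Prod.ext ?_ ?_)) <;> simp only
    · rw [hα, hz']; ring
    · rw [hβ]; ring
    · linear_combination -hw₄
    · linear_combination hw₃
  let d₂ : S →ₗ[S] S × S × S × S := LinearMap.toSpanSingleton S _ (a, -b, y, -x)
  have hd₂_apply : ∀ c, d₂ c = (c * a, c * -b, c * y, c * -x) := fun c => rfl
  have hd₂ : Function.Injective d₂ := by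
    intro c c' h
    simp only [hd₂_apply, Prod.mk.injEq] at h
    exact mul_right_cancel₀ hy0 h.2.2.1
  have hex : Function.Exact d₂ d₁ := by
    rintro ⟨p, q, r, s⟩
    constructor
    · intro h
      have h' : (g * b * p + g * a * q, -y * p + a * r, -x * q + b * s, -x * r - y * s) =
          ((0, 0, 0, 0) : S × S × S × S) := congrArg Subtype.val h
      simp only [Prod.mk.injEq] at h'
      obtain ⟨-, h2, h3, h4⟩ := h'
      have h5 : y ∣ a * r := ⟨p, by linear_combination h2⟩
      obtain ⟨c, rfl⟩ := (hy.dvd_or_dvd h5).resolve_left hya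
      obtain rfl : p = a * c := mul_left_cancel₀ hy0 (by linear_combination -h2)
      obtain rfl : s = -x * c := mul_left_cancel₀ hy0 (by linear_combination -h4)
      obtain rfl : q = -b * c := mul_left_cancel₀ hx0 (by linear_combination -h3)
      refine ⟨c, ?_⟩
      rw [hd₂_apply]
      refine Prod.ext ?_ (Prod.ext ?_ (Prod.ext ?_ ?_)) <;> simp only <;> ring
    · rintro ⟨c, hc⟩
      rw [← hc, hd₂_apply]
      refine Subtype.ext ?_
      change (g * b * (c * a) + g * a * (c * -b), -y * (c * a) + a * (c * y),
        -x * (c * -b) + b * (c * -x), -x * (c * y) - y * (c * -x)) = 0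
      refine Prod.ext ?_ (Prod.ext ?_ (Prod.ext ?_ ?_)) <;> simp only [Prod.fst_zero, Prod.snd_zero] <;>
        ring
  have hS₀ := shortExact_of_linearMap _ d₀ (Submodule.injective_subtype _)
    (LinearMap.exact_subtype_ker_map d₀) hd₀
  have hS₁ := shortExact_of_linearMap d₂ d₁ hd₂ hex hd₁
  have hfree : PdLT S (S × S × S × S) 1 := pdLT_one_of_projective inferInstance
  have hfree' : PdLT S S 1 := pdLT_one_of_projective inferInstance
  constructor
  · exact hS₀.hasProjectiveDimensionLT_X₃ 2
      (hS₁.hasProjectiveDimensionLT_X₃ 1 hfree' (pdLT_mono one_le_two hfree))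
      (pdLT_mono (by omega) hfree)
  · intro hB2
    have hker : PdLT S (LinearMap.ker d₀) 1 := hS₀.hasProjectiveDimensionLT_X₁ 1 hfree hB2
    have := projective_of_pdLT_one hker
    obtain ⟨l, hl⟩ := ((hex.split_tfae hd₂ hd₁).out 0 1).1
      (Module.projective_lifting_property d₁ LinearMap.id hd₁)
    -- The retraction `l` of `d₂` expresses `1` through the entries of `d₂`.
    have h1 : l (a, -b, y, -x) = 1 := by
      have := LinearMap.congr_fun hl 1
      simpa [d₂] using this
    have h2 : ((a, -b, y, -x) : S × S × S × S) = a • (1, 0, 0, 0) + (-b) • (0, 1, 0, 0) +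
        y • (0, 0, 1, 0) + (-x) • (0, 0, 0, 1) := by simp
    rw [h2, map_add, map_add, map_add, map_smul, map_smul, map_smul, map_smul] at h1
    have h3 := congrArg ε h1
    simp [εx, εy, εa, εb] at h3

lemma constantCoeff_mon {N : Finset (Fin n)} {q : Fin n} (hq : q ∈ N) :
    constantCoeff (mon K N) = 0 := by
  rw [mon, map_prod]
  exact Finset.prod_eq_zero hq (constantCoeff_X K q)

/-- A variable that is not a vertex of any edge is a nonzerodivisor modulo the cover ideal. -/
lemma mem_coverIdeal_of_X_mul {E : Fin n → Fin n → Prop} {q : Fin n}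
    (hq : ∀ a b, E a b → a ≠ q ∧ b ≠ q) {f : MvPolynomial (Fin n) K}
    (hf : X q * f ∈ coverIdeal K E) : f ∈ coverIdeal K E := by
  rw [mem_coverIdeal_iff] at hf ⊢
  intro s hs a b hab
  have := hf (Finsupp.single q 1 + s) (by
    rw [support_X_mul]
    exact Finset.mem_map.2 ⟨s, hs, rfl⟩) a b hab
  obtain ⟨ha, hb⟩ := hq a b hab
  simpa [Finsupp.single_apply, Ne.symm ha, Ne.symm hb] using this

/-- The graph consisting of two stars with non-adjacent centres `p`, `q`, whose sets of leaves
`N`, `M` are not contained in each other, has a cover ideal of projective dimension two. -/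
lemma pdLT_two_stars {p q : Fin n} {N M : Finset (Fin n)} (hpq : p ≠ q) (hpN : p ∉ N)
    (hpM : p ∉ M) (hqN : q ∉ N) (hqM : q ∉ M) {u v : Fin n} (huN : u ∈ N) (huM : u ∉ M)
    (hvM : v ∈ M) (hvN : v ∉ N) {E : Fin n → Fin n → Prop}
    (hE : ∀ a b, E a b ↔ (a = p ∧ b ∈ N) ∨ (a = q ∧ b ∈ M)) :
    PdLT (MvPolynomial (Fin n) K) (coverIdeal K E) 3 ∧
      ¬ PdLT (MvPolynomial (Fin n) K) (coverIdeal K E) 2 := by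
  have hN : mon K (N ∩ M) * mon K (N \ M) = mon K N := Finset.prod_inter_mul_prod_sdiff N M X
  have hM : mon K (N ∩ M) * mon K (M \ N) = mon K M := by
    rw [Finset.inter_comm]; exact Finset.prod_inter_mul_prod_sdiff M N X
  have hNM : mon K (N ∩ M) * mon K (N \ M) * mon K (M \ N) = mon K (N ∪ M) := by
    rw [hN, ← Finset.union_sdiff_self_eq_union]
    exact (Finset.prod_union Finset.disjoint_sdiff).symm
  -- The leaves split into the common ones and the private ones of either centre.
  refine pdLT_four_generated (constantCoeff (σ := Fin n) (R := K)) (x := X p) (y := X q)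
    (g := mon K (N ∩ M)) (a := mon K (N \ M)) (b := mon K (M \ N)) X_prime X_prime
    (by simp [X_dvd_mon, hqN]) (by simp [X_dvd_mon, hqM]) (by simp [X_dvd_mon, hqN])
    (by simp [X_dvd_mon, hpN]) (by simp [X_dvd_mon, hpN]) ?_ (constantCoeff_X K p)
    (constantCoeff_X K q) (constantCoeff_mon (Finset.mem_sdiff.2 ⟨huN, huM⟩))
    (constantCoeff_mon (Finset.mem_sdiff.2 ⟨hvM, hvN⟩)) ?_
  · -- `(x_p, ∏_{N \ M} x)` is the cover ideal of a star that does not meet `q`.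
    intro w c d h
    let E₀ : Fin n → Fin n → Prop := fun a b => a = p ∧ b ∈ N \ M
    have hw : w ∈ coverIdeal K E₀ := by
      refine mem_coverIdeal_of_X_mul (q := q) ?_ ?_
      · rintro a b ⟨rfl, hb⟩
        refine ⟨hpq, ?_⟩
        rintro rfl
        exact hqN (Finset.mem_sdiff.1 hb).1
      · rw [h]
        refine mem_coverIdeal.2 ?_
        rintro a b ⟨rfl, hb⟩
        exact Ideal.add_mem _ (mem_span_pair_of_X_dvd_left (dvd_mul_right _ _))
          (mem_span_pair_of_X_dvd_right ((X_dvd_mon.2 hb).mul_right _))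
    obtain ⟨b, t, -, hbt⟩ := coverIdeal_peel (E' := fun _ _ => False) p (N \ M) (by simp)
      (fun b hb => ⟨rfl, hb⟩) hw
    exact ⟨t, b, by rw [hbt]; ring⟩
  · rw [hNM, mul_assoc (X p), hM, hN]
    apply le_antisymm
    · refine coverIdeal_le fun s hs => ?_
      have hs₁ : s p = 0 → mon K N ∣ monomial s 1 := fun h => mon_dvd_monomial fun c hc =>
        (hs p c ((hE p c).2 (Or.inl ⟨rfl, hc⟩))).resolve_left (fun h' => h' h)
      have hs₂ : s q = 0 → mon K M ∣ monomial s 1 := fun h => mon_dvd_monomial fun c hc =>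
        (hs q c ((hE q c).2 (Or.inr ⟨rfl, hc⟩))).resolve_left (fun h' => h' h)
      have key : ∀ {A B : Finset (Fin n)}, Disjoint A B → mon K A ∣ monomial s 1 →
          mon K B ∣ monomial s 1 → mon K A * mon K B ∣ monomial s 1 := by
        intro A B hAB hA hB
        rw [mon, mon, ← Finset.prod_union hAB]
        refine mon_dvd fun c hc => ?_
        rcases Finset.mem_union.1 hc with hc | hc
        · exact (X_dvd_mon.2 hc).trans hA
        · exact (X_dvd_mon.2 hc).trans hB
      have hX : ∀ c : Fin n, (X c : MvPolynomial (Fin n) K) = mon K {c} := fun c =>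
        (Finset.prod_singleton X c).symm
      have hX' : ∀ c : Fin n, s c ≠ 0 → mon K {c} ∣ monomial s 1 := fun c hc =>
        mon_dvd_monomial (by simpa using hc)
      rw [hX p, hX q]
      by_cases hp : s p = 0
      · by_cases hq : s q = 0
        · refine Ideal.mem_of_dvd _ (b := monomial s 1) (a := mon K (N ∪ M)) ?_
            (Ideal.subset_span (by simp))
          refine mon_dvd fun c hc => ?_
          rcases Finset.mem_union.1 hc with hc | hc
          · exact (X_dvd_mon.2 hc).trans (hs₁ hp)
          · exact (X_dvd_mon.2 hc).trans (hs₂ hq)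
        · exact Ideal.mem_of_dvd _ (key (Finset.disjoint_singleton_right.2 hqN) (hs₁ hp) (hX' q hq))
            (Ideal.subset_span (by simp))
      · by_cases hq : s q = 0
        · exact Ideal.mem_of_dvd _ (key (Finset.disjoint_singleton_left.2 hpM) (hX' p hp) (hs₂ hq))
            (Ideal.subset_span (by simp))
        · exact Ideal.mem_of_dvd _
            (key (Finset.disjoint_singleton_left.2 (by simpa using hpq)) (hX' p hp) (hX' q hq))
            (Ideal.subset_span (by simp))
    · rw [Ideal.span_le]
      rintro f (rfl | rfl | rfl | rfl) <;> refine mem_coverIdeal.2 fun a b hab => ?_ <;>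
        rcases (hE a b).1 hab with ⟨rfl, hb⟩ | ⟨rfl, hb⟩
      · exact mem_span_pair_of_X_dvd_left (dvd_mul_right _ _)
      · exact mem_span_pair_of_X_dvd_left (dvd_mul_left _ _)
      · exact mem_span_pair_of_X_dvd_left (dvd_mul_right _ _)
      · exact mem_span_pair_of_X_dvd_right ((X_dvd_mon.2 hb).mul_left _)
      · exact mem_span_pair_of_X_dvd_right ((X_dvd_mon.2 hb).mul_right _)
      · exact mem_span_pair_of_X_dvd_left (dvd_mul_left _ _)
      · exact mem_span_pair_of_X_dvd_right (X_dvd_mon.2 (Finset.mem_union_left _ hb))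
      · exact mem_span_pair_of_X_dvd_right (X_dvd_mon.2 (Finset.mem_union_right _ hb))

end LowerBounds

/-! ### The graph of the lexsegment -/

section Lexsegment

variable {K : Type} [Field K] {n i j k : ℕ}

/-- Part of the graph of the lexsegment from `x_1 x_i` to `x_j x_k`: the edges with smaller
endpoint `x_a`, where `a = 1` (if `w` holds) or `t ≤ a`. The vertex `a : Fin n` stands for
`x_{a+1}`. -/
def segGraph (n i j k : ℕ) (w : Prop) (t : ℕ) (a b : Fin n) : Prop :=
  a < b ∧ ((w ∧ a.val + 1 = 1 ∧ i ≤ b.val + 1) ∨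
    (t ≤ a.val + 1 ∧ (a.val + 1 < j ∨ (a.val + 1 = j ∧ b.val + 1 ≤ k))))

lemma lexSegAlexDual_eq (hj : 2 ≤ j) :
    lexSegAlexDual K n (1, i) (j, k) = coverIdeal K (segGraph n i j k True 2) := by
  have hxv : ∀ a : Fin n, xv K n (a.val + 1) = X a := fun a => by simp [xv]
  have key : ∀ a b : Fin n, segGraph n i j k True 2 a b ↔
      (a.val + 1, b.val + 1) ∈ lexSegSet n (1, i) (j, k) := by
    intro a b
    simp only [segGraph, lexSegSet, validPair, lexGE, Set.mem_ofPred_eq, true_and, Fin.lt_def]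
    omega
  apply le_antisymm
  · refine le_iInf fun a => le_iInf fun b => le_iInf fun hab => ?_
    refine (iInf₂_le _ ((key a b).1 hab)).trans ?_
    rw [hxv, hxv]
  · refine le_iInf₂ fun ⟨a, b⟩ hab => ?_
    obtain ⟨h1, h2, h3⟩ := hab.1
    simp only at h1 h2 h3
    obtain ⟨a, rfl⟩ : ∃ a', a = a' + 1 := ⟨a - 1, by omega⟩
    obtain ⟨b, rfl⟩ : ∃ b', b = b' + 1 := ⟨b - 1, by omega⟩
    refine (iInf_le_of_le ⟨a, by omega⟩ (iInf_le_of_le ⟨b, by omega⟩ (iInf_le_of_le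
      ((key _ _).2 hab) ?_)))
    rw [← hxv, ← hxv]

/-- Deleting the vertex `x_t` with `t < j`, whose larger neighbours are `x_{t+1}, …, x_n`. If the
edges at `x_1` are present, `t + 2 ≤ i` ensures that `x_1` is not adjacent to `x_t` and that all
its neighbours are among those of `x_t`. -/
lemma pdLT_segGraph_peel {w : Prop} {t : ℕ} (ht : 2 ≤ t) (htj : t < j) (hjk : j < k) (hkn : k ≤ n)
    (hw : w → t + 2 ≤ i) (d : ℕ) :
    PdLT (MvPolynomial (Fin n) K) (coverIdeal K (segGraph n i j k w t)) (d + 2) ↔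
      PdLT (MvPolynomial (Fin n) K) (coverIdeal K (segGraph n i j k w (t + 1))) (d + 2) := by
  refine pdLT_peel ⟨t - 1, by omega⟩ (Finset.univ.filter fun b => t < b.val + 1) ?_ ?_ ?_ ?_ d
  · simp; omega
  · intro a b
    by_cases hw' : w <;>
      simp only [hw', segGraph, Finset.mem_filter, Finset.mem_univ, true_and, false_and, false_or,
        Fin.ext_iff, Fin.lt_def] <;>
      omega
  · intro a b
    by_cases hw' : w
    · have := hw hw'
      simp only [hw', segGraph, Finset.mem_filter, Finset.mem_univ, true_and, Fin.ext_iff,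
        Fin.lt_def, ne_eq]
      omega
    · simp only [hw', segGraph, Finset.mem_filter, Finset.mem_univ, true_and, false_and, false_or,
        Fin.ext_iff, Fin.lt_def, ne_eq]
      omega
  · intro b
    simp only [segGraph, Finset.mem_filter, Finset.mem_univ, true_and, Fin.lt_def]
    omega

lemma pdLT_coverIdeal_of_empty {E : Fin n → Fin n → Prop} (hE : ∀ a b, ¬ E a b) (d : ℕ) :
    PdLT (MvPolynomial (Fin n) K) (coverIdeal K E) (d + 1) := by
  have : coverIdeal K E = ⊤ := by simp [coverIdeal, hE]
  rw [this]
  refine pdLT_mono (by omega) (pdLT_one_of_projective ?_)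
  exact Module.Projective.of_equiv (Submodule.topEquiv (R := MvPolynomial (Fin n) K)).symm

/-- Deleting the vertex `x_j`, whose larger neighbours are `x_{j+1}, …, x_k`. If the edges at `x_1`
are present, they are covered by these neighbours only for `k = n`. -/
lemma pdLT_segGraph_last {w : Prop} (hj : 2 ≤ j) (hjk : j < k) (hkn : k ≤ n)
    (hw : w → j + 2 ≤ i ∧ k = n) (d : ℕ) :
    PdLT (MvPolynomial (Fin n) K) (coverIdeal K (segGraph n i j k w j)) (d + 2) ↔
      PdLT (MvPolynomial (Fin n) K) (coverIdeal K (segGraph n i j k w (j + 1))) (d + 2) := by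
  refine pdLT_peel ⟨j - 1, by omega⟩
    (Finset.univ.filter fun b => j < b.val + 1 ∧ b.val + 1 ≤ k) ?_ ?_ ?_ ?_ d
  · simp
    omega
  · intro a b
    by_cases hw' : w <;>
      simp only [hw', segGraph, Finset.mem_filter, Finset.mem_univ, true_and, false_and, false_or,
        Fin.ext_iff, Fin.lt_def] <;>
      omega
  · intro a b
    by_cases hw' : w
    · have := hw hw'
      simp only [hw', segGraph, Finset.mem_filter, Finset.mem_univ, true_and, Fin.ext_iff,
        Fin.lt_def, ne_eq]
      omega
    · simp only [hw', segGraph, Finset.mem_filter, Finset.mem_univ, true_and, false_and, false_or,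
        Fin.ext_iff, Fin.lt_def, ne_eq]
      omega
  · intro b
    simp only [segGraph, Finset.mem_filter, Finset.mem_univ, true_and, Fin.lt_def]
    omega

/-- Without the edges at `x_1`, all vertices can be deleted one after the other. The number `r`
bounds the remaining deletions. -/
lemma pdLT_segGraph_false (hj : 2 ≤ j) (hjk : j < k) (hkn : k ≤ n) (r : ℕ) :
    ∀ t, 2 ≤ t → j < t + r →
      PdLT (MvPolynomial (Fin n) K) (coverIdeal K (segGraph n i j k False t)) 2 := by
  induction r with
  | zero =>
    intro t _ htj
    exact pdLT_coverIdeal_of_empty (by simp only [segGraph, false_and, false_or]; omega) 1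
  | succ r ih =>
    intro t ht htr
    rcases lt_trichotomy t j with h | rfl | h
    · exact (pdLT_segGraph_peel ht h hjk hkn False.elim 0).2 (ih (t + 1) (by omega) (by omega))
    · exact (pdLT_segGraph_last ht hjk hkn False.elim 0).2 (ih (t + 1) (by omega) (by omega))
    · exact pdLT_coverIdeal_of_empty (by simp only [segGraph, false_and, false_or]; omega) 1

/-- Deleting the vertex `x_1` once its neighbours `x_i, …, x_n` cover all remaining edges. -/
lemma pdLT_segGraph_first {t : ℕ} (ht : 2 ≤ t) (hjk : j < k) (hkn : k ≤ n) (hi : 2 ≤ i)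
    (hit : i ≤ t + 1 ∨ j < t) (d : ℕ) :
    PdLT (MvPolynomial (Fin n) K) (coverIdeal K (segGraph n i j k True t)) (d + 2) ↔
      PdLT (MvPolynomial (Fin n) K) (coverIdeal K (segGraph n i j k False t)) (d + 2) := by
  refine pdLT_peel ⟨0, by omega⟩ (Finset.univ.filter fun b => i ≤ b.val + 1) ?_ ?_ ?_ ?_ d
  · simp; omega
  · intro a b
    simp only [segGraph, Finset.mem_filter, Finset.mem_univ, true_and, false_and, false_or,
      Fin.ext_iff, Fin.lt_def]
    omega
  · intro a b
    simp only [segGraph, Finset.mem_filter, Finset.mem_univ, true_and, false_and, false_or,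
      Fin.ext_iff, Fin.lt_def, ne_eq]
    omega
  · intro b
    simp only [segGraph, Finset.mem_filter, Finset.mem_univ, true_and, Fin.lt_def]
    omega

/-- The upper bound in the generic case: the vertices `x_2, x_3, …` are deleted until the
neighbourhood of `x_1` covers the remaining edges, and then `x_1` itself is deleted. -/
lemma pdLT_segGraph_true (hi : 2 ≤ i) (hj : 2 ≤ j) (hjk : j < k) (hkn : k ≤ n)
    (h : ¬ (j + 2 ≤ i ∧ k ≠ n)) (r : ℕ) : ∀ t, 2 ≤ t → j < t + r →
      PdLT (MvPolynomial (Fin n) K) (coverIdeal K (segGraph n i j k True t)) 2 := by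
  induction r with
  | zero =>
    intro t ht htj
    exact (pdLT_segGraph_first ht hjk hkn hi (by omega) 0).2
      (pdLT_segGraph_false hj hjk hkn 0 t ht htj)
  | succ r ih =>
    intro t ht htr
    by_cases hit : i ≤ t + 1 ∨ j < t
    · exact (pdLT_segGraph_first ht hjk hkn hi hit 0).2
        (pdLT_segGraph_false hj hjk hkn (r + 1) t ht htr)
    · rcases (show t ≤ j by omega).lt_or_eq with htj | rfl
      · exact (pdLT_segGraph_peel ht htj hjk hkn (fun _ => by omega) 0).2
          (ih (t + 1) (by omega) (by omega))
      · exact (pdLT_segGraph_last ht hjk hkn (fun _ => by omega) 0).2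
          (ih (t + 1) (by omega) (by omega))

/-- If `j + 2 ≤ i`, the vertices `x_2, …, x_{j-1}` may be deleted one after the other, which leaves
the star of `x_1` and the edges with smaller endpoint `x_j`. -/
lemma pdLT_segGraph_reduce (hj : 2 ≤ j) (hjk : j < k) (hkn : k ≤ n) (hji : j + 2 ≤ i) (d r : ℕ) :
    ∀ t, 2 ≤ t → t + r = j →
      (PdLT (MvPolynomial (Fin n) K) (coverIdeal K (segGraph n i j k True t)) (d + 2) ↔
        PdLT (MvPolynomial (Fin n) K) (coverIdeal K (segGraph n i j k True j)) (d + 2)) := by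
  induction r with
  | zero => rintro t _ rfl; rfl
  | succ r ih =>
    intro t ht htr
    exact (pdLT_segGraph_peel ht (by omega) hjk hkn (fun _ => by omega) d).trans
      (ih (t + 1) (by omega) (by omega))

/-- The two stars left by `pdLT_segGraph_reduce` have the private leaves `x_n` (at `x_1`, as `k < n`)
and `x_{j+1}` (at `x_j`, as `j + 2 ≤ i`). -/
lemma pdLT_segGraph_exceptional (hj : 2 ≤ j) (hjk : j < k) (hkn : k < n) (hji : j + 2 ≤ i)
    (hin : i ≤ n) :
    PdLT (MvPolynomial (Fin n) K) (coverIdeal K (segGraph n i j k True 2)) 3 ∧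
      ¬ PdLT (MvPolynomial (Fin n) K) (coverIdeal K (segGraph n i j k True 2)) 2 := by
  rw [pdLT_segGraph_reduce hj hjk hkn.le hji 1 (j - 2) 2 le_rfl (by omega),
    pdLT_segGraph_reduce hj hjk hkn.le hji 0 (j - 2) 2 le_rfl (by omega)]
  refine pdLT_two_stars (p := ⟨0, by omega⟩) (q := ⟨j - 1, by omega⟩)
    (N := Finset.univ.filter fun b => i ≤ b.val + 1)
    (M := Finset.univ.filter fun b => j < b.val + 1 ∧ b.val + 1 ≤ k)
    (u := ⟨n - 1, by omega⟩) (v := ⟨j, by omega⟩) ?_ ?_ ?_ ?_ ?_ ?_ ?_ ?_ ?_ ?_ <;>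
    simp only [segGraph, Finset.mem_filter, Finset.mem_univ, true_and, Fin.ext_iff, Fin.lt_def,
      ne_eq] <;> omega

lemma not_projective_segGraph (hi : 2 ≤ i) (hin : i ≤ n) :
    ¬ PdLT (MvPolynomial (Fin n) K) (coverIdeal K (segGraph n i j k True 2)) 1 := by
  intro h
  refine not_projective_coverIdeal ⟨⟨0, by omega⟩, ⟨n - 1, by omega⟩, ?_⟩
    (fun a b hab => hab.1.ne) (projective_of_pdLT_one h)
  simp only [segGraph, Fin.lt_def, true_and]
  omega

end Lexsegment

end LexSegProof

/-- For the lexsegment edge ideal `I = (L(x_1 x_i, x_j x_k))`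
with `2 ≤ j < k ≤ n` and `u >_lex v`, the projective dimension of `S/I*`
(`I*` the Alexander dual) is `3` if `i ≥ j + 2` and `x_n ∤ v` (i.e. `k ≠ n`),
and is `2` otherwise. -/
theorem lexSegAlexDual_projDim (K : Type) [Field K] (n i j k : ℕ)
    (hi2 : 2 ≤ i) (hin : i ≤ n) (hj : 2 ≤ j) (hjk : j < k) (hkn : k ≤ n)
    (huv : lexGT (1, i) (j, k)) :
    (j + 2 ≤ i ∧ k ≠ n →
        projDim (ModuleCat.of (MvPolynomial (Fin n) K)
          (MvPolynomial (Fin n) K ⧸ lexSegAlexDual K n (1, i) (j, k))) = 3) ∧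
      (¬(j + 2 ≤ i ∧ k ≠ n) →
        projDim (ModuleCat.of (MvPolynomial (Fin n) K)
          (MvPolynomial (Fin n) K ⧸ lexSegAlexDual K n (1, i) (j, k))) = 2) := by
  open LexSegProof in
  rw [lexSegAlexDual_eq hj]
  constructor
  · rintro ⟨hji, hk⟩
    obtain ⟨h, h'⟩ := pdLT_segGraph_exceptional (K := K) hj hjk (by omega) hji hin
    exact projDim_eq ((pdLT_quotient_iff _ 2).2 h) (mt (pdLT_quotient_iff _ 1).1 h')
  · intro h
    exact projDim_eq
      ((pdLT_quotient_iff _ 1).2 (pdLT_segGraph_true hi2 hj hjk hkn h j 2 le_rfl (by omega)))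
      (mt (pdLT_quotient_iff _ 0).1 (not_projective_segGraph hi2 hin))
end

section
/- Let I = (L(u,v)) ⊂ S = K[x_1,…,x_n] be the lexsegment edge ideal determined by u = x_1 x_i and v = x_2 x_k with 3 ≤ i ≤ k ≤ n. Then I admits the decomposition I = (x_1,x_2) ∩ (x_1,x_3,…,x_k) ∩ (x_2,x_i,…,x_n) ∩ (x_3,…,x_n), where each factor is the ideal generated by the listed variables. -/
/-!
Both sides are monomial ideals, so only monomials have to be compared. The generators of the
left-hand side are `x_1 x_t` for `i ≤ t ≤ n` and `x_2 x_t` for `3 ≤ t ≤ k`, and each of them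
visibly lies in all four ideals of variables.

Conversely, a polynomial lies in an ideal generated by variables exactly when each of its
monomials is divisible by one of these variables (`mem_span_xv_iff`). Let `m` be a monomial
occurring in an element of the intersection. If `x_1 ∤ m`, the first two factors give `x_2 ∣ m`
and `x_t ∣ m` for some `3 ≤ t ≤ k`. If `x_1 ∣ m`, the third factor gives either `x_t ∣ m` with
`t ≥ i`, so that `x_1 x_t ∣ m`, or `x_2 ∣ m`; in the latter case the last factor gives `x_t ∣ m`
with `t ≥ 3`, and since `i ≤ k` either `t ≥ i`, so that `x_1 x_t ∣ m`, or `t ≤ k`, so that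
`x_2 x_t ∣ m`. In every case `m` is divisible by a generator (`monomial_mem_of_mul_xv_mem`).
-/

open MvPolynomial

/-- The exponent of `x_t` (1-based) in the monomial `x^m`, set to `0` when `t > n`. As for `xv`,
the index `t = 0` is read as `t = 1`. -/
def xvExp {n : ℕ} (m : Fin n →₀ ℕ) (t : ℕ) : ℕ :=
  if h : t - 1 < n then m ⟨t - 1, h⟩ else 0

/-- Membership in an ideal generated by variables is tested monomial by monomial. -/
lemma mem_span_xv_iff (K : Type) [Field K] (n : ℕ) (T : Set ℕ)
    (hT : ∀ t ∈ T, 1 ≤ t ∧ t ≤ n) (f : MvPolynomial (Fin n) K) :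
    f ∈ Ideal.span ((fun t => xv K n t) '' T) ↔
      ∀ m ∈ f.support, ∃ t ∈ T, xvExp m t ≠ 0 := by
  have himage : (fun t => xv K n t) '' T =
      (MvPolynomial.X : Fin n → MvPolynomial (Fin n) K) '' {j | (j : ℕ) + 1 ∈ T} := by
    ext p
    constructor
    · rintro ⟨t, ht, rfl⟩
      obtain ⟨h1, h2⟩ := hT t ht
      have h : t - 1 < n := by omega
      refine ⟨⟨t - 1, h⟩, ?_, by simp [xv, h]⟩
      simpa [Nat.sub_add_cancel h1] using ht
    · rintro ⟨j, hj, rfl⟩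
      exact ⟨j + 1, hj, by simp [xv]⟩
  rw [himage, mem_ideal_span_X_image]
  refine forall₂_congr fun m _ => ?_
  constructor
  · rintro ⟨j, hj, hm⟩
    exact ⟨j + 1, hj, by simpa [xvExp] using hm⟩
  · rintro ⟨t, ht, hm⟩
    obtain ⟨h1, h2⟩ := hT t ht
    have h : t - 1 < n := by omega
    refine ⟨⟨t - 1, h⟩, ?_, by simpa [xvExp, h] using hm⟩
    simpa [Nat.sub_add_cancel h1] using ht

/-- If two distinct variables divide a monomial and their product lies in `I`, then the
monomial lies in `I`. -/
lemma monomial_mem_of_mul_xv_mem {K : Type} [Field K] {n : ℕ}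
    {I : Ideal (MvPolynomial (Fin n) K)} {m : Fin n →₀ ℕ} {a b : ℕ} (c : K)
    (ha1 : 1 ≤ a) (hab : a < b) (ha : xvExp m a ≠ 0) (hb : xvExp m b ≠ 0)
    (hI : xv K n a * xv K n b ∈ I) : monomial m c ∈ I := by
  unfold xvExp at ha hb
  split_ifs at ha hb with h1 h2
  · refine I.mem_of_dvd ?_ hI
    have hne : (⟨a - 1, h1⟩ : Fin n) ≠ ⟨b - 1, h2⟩ := by
      simp only [ne_eq, Fin.mk.injEq]; omega
    have hle : Finsupp.single (⟨a - 1, h1⟩ : Fin n) 1 + Finsupp.single ⟨b - 1, h2⟩ 1 ≤ m := by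
      intro j
      rcases eq_or_ne (⟨a - 1, h1⟩ : Fin n) j with rfl | hja
      · simp [hne.symm]; omega
      · rcases eq_or_ne (⟨b - 1, h2⟩ : Fin n) j with rfl | hjb
        · simp [hne]; omega
        · simp [hja, hjb]
    refine ⟨monomial (m - (Finsupp.single ⟨a - 1, h1⟩ 1 + Finsupp.single ⟨b - 1, h2⟩ 1)) c, ?_⟩
    simp only [xv, h1, h2, dif_pos, X, monomial_mul, one_mul]
    rw [add_tsub_cancel_of_le hle]
  all_goals exact absurd rfl ‹_›

/-- For `3 ≤ i ≤ k ≤ n`, the lexsegment edge ideal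
`I = (L(x_1 x_i, x_2 x_k))` decomposes as
`I = (x_1,x_2) ∩ (x_1,x_3,…,x_k) ∩ (x_2,x_i,…,x_n) ∩ (x_3,…,x_n)`. -/
theorem lexSegIdeal_decomposition (K : Type) [Field K] (n i k : ℕ)
    (hi3 : 3 ≤ i) (hik : i ≤ k) (hkn : k ≤ n) :
    lexSegIdeal K n (1, i) (2, k) =
      Ideal.span {xv K n 1, xv K n 2} ⊓
        Ideal.span (insert (xv K n 1) ((fun t => xv K n t) '' {t | 3 ≤ t ∧ t ≤ k})) ⊓
        Ideal.span (insert (xv K n 2) ((fun t => xv K n t) '' {t | i ≤ t ∧ t ≤ n})) ⊓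
        Ideal.span ((fun t => xv K n t) '' {t | 3 ≤ t ∧ t ≤ n}) := by
  apply le_antisymm
  · refine Ideal.span_le.2 ?_
    rintro _ ⟨⟨a, b⟩, ⟨⟨h1, h2, h3⟩, h4, h5⟩, rfl⟩
    simp only [lexGE] at h1 h2 h3 h4 h5
    have hgen : ∀ {s : Set (MvPolynomial (Fin n) K)} {x : MvPolynomial (Fin n) K},
        x ∈ s → x ∈ Ideal.span s := fun hx => Ideal.subset_span hx
    have ha : a = 1 ∧ i ≤ b ∨ a = 2 ∧ b ≤ k := by omega
    rcases ha with ⟨rfl, hb⟩ | ⟨rfl, hb⟩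
    · exact ⟨⟨⟨Ideal.mul_mem_right _ _ (hgen (by simp)), Ideal.mul_mem_right _ _ (hgen (by simp))⟩,
        Ideal.mul_mem_left _ _ (hgen (Or.inr ⟨b, ⟨hb, h3⟩, rfl⟩))⟩,
        Ideal.mul_mem_left _ _ (hgen ⟨b, ⟨hi3.trans hb, h3⟩, rfl⟩)⟩
    · exact ⟨⟨⟨Ideal.mul_mem_right _ _ (hgen (by simp)),
        Ideal.mul_mem_left _ _ (hgen (Or.inr ⟨b, ⟨h2, hb⟩, rfl⟩))⟩,
        Ideal.mul_mem_right _ _ (hgen (by simp))⟩,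
        Ideal.mul_mem_left _ _ (hgen ⟨b, ⟨h2, h3⟩, rfl⟩)⟩
  · rintro f ⟨⟨⟨f1, f2⟩, f3⟩, f4⟩
    -- Each generating set is rewritten as the image of a set of indices in `1, …, n`.
    rw [← Set.image_pair (fun t => xv K n t)] at f1
    rw [← Set.image_insert_eq (f := fun t => xv K n t)] at f2 f3
    have g1 := (mem_span_xv_iff K n _ (by
      simp only [Set.mem_insert_iff, Set.mem_singleton_iff]; omega) f).1 f1
    have g2 := (mem_span_xv_iff K n _ (by
      simp only [Set.mem_insert_iff, Set.mem_ofPred_eq]; omega) f).1 f2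
    have g3 := (mem_span_xv_iff K n _ (by
      simp only [Set.mem_insert_iff, Set.mem_ofPred_eq]; omega) f).1 f3
    have g4 := (mem_span_xv_iff K n _ (by
      simp only [Set.mem_ofPred_eq]; omega) f).1 f4
    have gen1 : ∀ t, i ≤ t → t ≤ n → xv K n 1 * xv K n t ∈ lexSegIdeal K n (1, i) (2, k) :=
      fun t h1 h2 => Ideal.subset_span
        ⟨(1, t), ⟨by simp only [validPair]; omega, Or.inr ⟨rfl, h1⟩, Or.inl one_lt_two⟩, rfl⟩
    have gen2 : ∀ t, 3 ≤ t → t ≤ k → xv K n 2 * xv K n t ∈ lexSegIdeal K n (1, i) (2, k) :=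
      fun t h1 h2 => Ideal.subset_span
        ⟨(2, t), ⟨by simp only [validPair]; omega, Or.inl one_lt_two, Or.inr ⟨rfl, h2⟩⟩, rfl⟩
    rw [f.as_sum]
    refine Ideal.sum_mem _ fun m hm => ?_
    have use1 : ∀ t, i ≤ t → t ≤ n → xvExp m 1 ≠ 0 → xvExp m t ≠ 0 →
        monomial m (f.coeff m) ∈ lexSegIdeal K n (1, i) (2, k) := fun t h1 h2 e1 et =>
      monomial_mem_of_mul_xv_mem _ le_rfl (by omega) e1 et (gen1 t h1 h2)
    have use2 : ∀ t, 3 ≤ t → t ≤ k → xvExp m 2 ≠ 0 → xvExp m t ≠ 0 →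
        monomial m (f.coeff m) ∈ lexSegIdeal K n (1, i) (2, k) := fun t h1 h2 e2 et =>
      monomial_mem_of_mul_xv_mem _ one_le_two (by omega) e2 et (gen2 t h1 h2)
    by_cases e1 : xvExp m 1 = 0
    · obtain ⟨s, rfl | rfl, es⟩ := g1 m hm
      · exact absurd e1 es
      obtain ⟨t, rfl | ⟨h1, h2⟩, et⟩ := g2 m hm
      · exact absurd e1 et
      exact use2 t h1 h2 es et
    · obtain ⟨s, rfl | ⟨h1, h2⟩, es⟩ := g3 m hm
      · obtain ⟨t, ⟨h1, h2⟩, et⟩ := g4 m hm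
        by_cases hit : i ≤ t
        · exact use1 t hit h2 e1 et
        · exact use2 t h1 (by omega) es et
      · exact use1 s h1 h2 e1 es
end

section
/- Let I = (L(u,v)) ⊂ S = K[x_1,…,x_n] be the lexsegment edge ideal determined by u = x_1 x_i and v = x_2 x_k with 3 ≤ k < i ≤ n and v >_lex x_{i-1}x_n. Then projdim_S(S/I) = n + k − i − 1, which equals the number of minimal monomial generators of I. -/
/-!
Write `S = K[x_1,…,x_n]` and `I = x₁ (x_i,…,x_n) + x₂ (x_3,…,x_k)`. The variables
`x_3,…,x_k,x_i,…,x_n` are pairwise distinct, since `k < i`, and they correspond to the generators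
of `I`; let `r = n + k - i - 1` be their number and `L` the ideal they generate.

*Upper bound.* Any monomial ideal with `m` generators satisfies `projdim S/I ≤ m`
(`pdLE_monoIdeal`), by induction on `m`: if `I = I' + (f)` then
`0 → S/(I' : f) → S/I' → S/I → 0` is exact, and `(I' : f)` is again a monomial ideal with no more
generators than `I'`. The number `projDim` is defined through lengths of projective resolutions,
so a vanishing statement for `Ext` is converted into a short resolution in
`exists_resolution_of_pdLE`.

*Lower bound.* After inverting `x₁ x₂`, the ideal `I` becomes `L`, which is generated by a regular
sequence of length `r`. Concretely, let `N` be the maximal ideal of the point `(1,1,0,…,0)`. Then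
`Ext^r(S/L, S/N) ≠ 0` (`ext_vars_ne_zero`). The element `y = x₁ x₂` kills `L/I` and acts as the
identity on `S/N`, so `Ext(L/I, S/N) = 0`, and `Ext^r(S/L, S/N)` embeds in `Ext^r(S/I, S/N)`
(`ext_lift`). A nonzero `Ext^r` forces every projective resolution of `S/I` to have length at
least `r` (`resolution_length`).

*Minimal generators.* All `r` generators have degree two, so none is redundant
(`minimalGens_monoIdeal`).
-/

open MvPolynomial

/-! ### Projective resolutions and `Ext` -/

open CategoryTheory Abelian Limits

/-- A projective resolution of `M` from an exact complex `⋯ → A₁ → A₀ → M → 0` with projective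
terms. -/
noncomputable def resolutionOfExact {C : Type*} [Category C] [Abelian C] {M : C}
    (A : ChainComplex C ℕ) [∀ n, Projective (A.X n)] (p : A.X 0 ⟶ M) [Epi p]
    (w : A.d 1 0 ≫ p = 0) (h₀ : (ShortComplex.mk _ _ w).Exact) (h : ∀ n, A.ExactAt (n + 1)) :
    ProjectiveResolution M where
  complex := A
  π := (ChainComplex.toSingle₀Equiv A M).symm ⟨p, w⟩
  quasiIso := ⟨fun n => by
    cases n with
    | zero =>
      rw [ChainComplex.quasiIsoAt₀_iff, ShortComplex.quasiIso_iff_of_zeros' _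
        (A.shape 0 0 (by simp)) rfl rfl]
      refine (ShortComplex.exact_and_epi_g_iff_of_iso ?_).2 ⟨h₀, ‹Epi p›⟩
      have hπ : ((ChainComplex.toSingle₀Equiv A M).symm ⟨p, w⟩).f 0 = p := by simp
      refine ShortComplex.isoMk (Iso.refl _) (Iso.refl _) (Iso.refl _)
        ((Category.id_comp _).trans (Category.comp_id _).symm) ?_
      refine (Category.id_comp _).trans (Eq.trans ?_ (Category.comp_id _).symm)
      exact hπ.symm
    | succ n =>
      rw [quasiIsoAt_iff_exactAt']
      · exact h n
      · apply ChainComplex.exactAt_succ_single_obj⟩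

/-- `HasProjectiveDimensionLE` is defined by vanishing of `Ext`; here an actual resolution of
length `d` is produced, by splicing a resolution of the kernel of a surjection
`P₀ → M` with `P₀` projective (of projective dimension `≤ d - 1`) onto `P₀`. -/
theorem exists_resolution_of_pdLE {C : Type*} [Category C] [Abelian C] [EnoughProjectives C]
    (d : ℕ) (M : C) (h : HasProjectiveDimensionLE M d) :
    ∃ P : ProjectiveResolution M, ∀ i : ℕ, d < i → IsZero (P.complex.X i) := by
  induction d generalizing M with
  | zero =>
    have : Projective M := projective_iff_hasProjectiveDimensionLE_zero M |>.2 h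
    refine ⟨ProjectiveResolution.self M, fun i hi => ?_⟩
    exact HomologicalComplex.isZero_single_obj_X _ _ _ _ (by omega)
  | succ d ih =>
    let S : ShortComplex C := ShortComplex.mk (kernel.ι (Projective.π M)) (Projective.π M) (by simp)
    have hS : S.ShortExact := { exact := ShortComplex.exact_kernel _ }
    have hK := (hS.hasProjectiveDimensionLT_X₃_iff d
      (inferInstanceAs (Projective (Projective.over M)))).1 h
    obtain ⟨Q, hQ⟩ := ih _ hK
    let q : Q.complex.X 0 ⟶ kernel (Projective.π M) := Q.π.f 0
    have : Epi q := inferInstanceAs (Epi (Q.π.f 0))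
    have hq : Q.complex.d 1 0 ≫ q = 0 := Q.complex_d_comp_π_f_zero
    have w : Q.complex.d 1 0 ≫ (q ≫ kernel.ι (Projective.π M)) = 0 := by
      rw [← Category.assoc, hq, zero_comp]
    let A := ChainComplex.augment Q.complex (q ≫ kernel.ι (Projective.π M)) w
    have e1 : A.ExactAt 1 := by
      rw [HomologicalComplex.exactAt_iff' _ 2 1 0 (by simp) (by simp)]
      let α : ShortComplex.mk _ _ hq ⟶ ShortComplex.mk _ _ w :=
        { τ₁ := 𝟙 _, τ₂ := 𝟙 _, τ₃ := kernel.ι _ }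
      exact (ShortComplex.exact_iff_of_epi_of_isIso_of_mono α).1 Q.exact₀
    have e2 (n : ℕ) : A.ExactAt (n + 2) := by
      rw [HomologicalComplex.exactAt_iff' _ (n+3) (n+2) (n+1) (by simp) (by simp)]
      exact Q.exact_succ n
    have e0 : (ShortComplex.mk (q ≫ kernel.ι (Projective.π M)) (Projective.π M)
        (by simp)).Exact := by
      let α : ShortComplex.mk (q ≫ kernel.ι (Projective.π M)) (Projective.π M) (by simp) ⟶ S :=
        { τ₁ := q, τ₂ := 𝟙 _, τ₃ := 𝟙 _ }
      exact (ShortComplex.exact_iff_of_epi_of_isIso_of_mono α).2 hS.exact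
    have w0 : (q ≫ kernel.ι (Projective.π M)) ≫ Projective.π M = 0 := by simp
    let p : A.X 0 ⟶ M := Projective.π M
    have hp : Epi p := inferInstanceAs (Epi (Projective.π M))
    have hproj (n : ℕ) : Projective (A.X n) := by
      cases n with
      | zero => exact inferInstanceAs (Projective (Projective.over M))
      | succ n => exact Q.projective n
    refine ⟨resolutionOfExact A p w0 e0 (fun n => ?_), ?_⟩
    · cases n with
      | zero => exact e1
      | succ n => exact e2 n
    · rintro (_ | n) hn
      · omega
      · exact hQ n (by omega)

/-- A nonzero class in `Ext^r(M, N)` is represented by a cocycle on the `r`-th term of any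
projective resolution of `M`, so no projective resolution of `M` is shorter than `r`. -/
theorem resolution_length {C : Type*} [Category C] [Abelian C] [HasExt.{0} C]
    {M N : C} {r d : ℕ} (e : Ext M N r) (he : e ≠ 0) (P : ProjectiveResolution M)
    (hP : ∀ i : ℕ, d < i → IsZero (P.complex.X i)) : r ≤ d := by
  by_contra! h
  obtain ⟨f, hf, rfl⟩ := P.extMk_surjective e (r+1) rfl
  obtain rfl : f = 0 := (hP r h).eq_of_src _ _
  exact he (P.extMk_zero _ rfl)

/-! ### Cyclic modules -/

section
variable {R : Type} [CommRing R]

/-- The cyclic module `R/I` as an object of the category of `R`-modules. -/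
abbrev cyc (I : Ideal R) : ModuleCat.{0} R := ModuleCat.of R (R ⧸ I)

/-- The complex `0 → R/J → R/I → R/L → 0`, where `J = (I : f)`, `L = I + (f)`, and the first map
is multiplication by `f`. The ideals `J` and `L` are variables characterised by `hJ` and `hL`, so
that convenient descriptions of them can be supplied. -/
noncomputable abbrev colonComplex (I J L : Ideal R) (f : R) (hJ : ∀ x, x ∈ J ↔ f * x ∈ I)
    (hL : L = I ⊔ Ideal.span {f}) : ShortComplex (ModuleCat.{0} R) :=
  ShortComplex.mk (X₁ := cyc J) (X₂ := cyc I) (X₃ := cyc L)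
    (ModuleCat.ofHom (Submodule.mapQ J I (LinearMap.mulLeft R f) fun x hx => (hJ x).1 hx))
    (ModuleCat.ofHom (Submodule.factor (hL ▸ le_sup_left)))
    (by
      refine ModuleCat.hom_ext (Submodule.linearMap_qext _ (LinearMap.ext fun x => ?_))
      refine (Submodule.Quotient.mk_eq_zero _).2 ?_
      rw [hL]
      exact Ideal.mem_sup_right (Ideal.mul_mem_right _ _ (Ideal.mem_span_singleton_self f)))

theorem colonComplex_shortExact (I J L : Ideal R) (f : R) (hJ : ∀ x, x ∈ J ↔ f * x ∈ I)
    (hL : L = I ⊔ Ideal.span {f}) : (colonComplex I J L f hJ hL).ShortExact := by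
  apply ModuleCat.shortComplex_shortExact
  · intro x
    obtain ⟨x, rfl⟩ := Submodule.Quotient.mk_surjective _ x
    constructor
    · intro h
      have h' : x ∈ L := (Submodule.Quotient.mk_eq_zero _).1 h
      rw [hL, Submodule.mem_sup] at h'
      obtain ⟨a, ha, b, hb, rfl⟩ := h'
      obtain ⟨c, rfl⟩ := Ideal.mem_span_singleton'.1 hb
      refine ⟨Submodule.Quotient.mk c, ?_⟩
      refine (Submodule.Quotient.eq I).2 ?_
      have : f * c - (a + c * f) = -a := by ring
      simpa [this] using ha
    · rintro ⟨y, hy⟩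
      rw [← hy]
      exact DFunLike.congr_fun (congrArg ModuleCat.Hom.hom (colonComplex I J L f hJ hL).zero) y
  · refine (injective_iff_map_eq_zero _).2 fun x hx => ?_
    obtain ⟨x, rfl⟩ := Submodule.Quotient.mk_surjective _ x
    refine (Submodule.Quotient.mk_eq_zero _).2 ((hJ x).2 ?_)
    exact (Submodule.Quotient.mk_eq_zero _).1 hx
  · exact Submodule.factor_surjective (hL ▸ le_sup_left)

/-- A Yoneda product `y • e` with a class into a module killed by `y` vanishes. -/
theorem smul_comp_eq_zero {M N P : ModuleCat.{0} R} {a b c : ℕ} (e : Ext M N a) (e' : Ext N P b)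
    (h : a + b = c) (y : R) (hy : y • 𝟙 P = 0) : (y • e).comp e' h = 0 := by
  have : y • e' = 0 := by
    rw [← e'.comp_mk₀_id, ← Ext.comp_smul, ← Ext.mk₀_smul, hy, Ext.mk₀_zero, Ext.comp_zero]
  rw [Ext.smul_comp, ← Ext.comp_smul, this, Ext.comp_zero]

theorem smul_id_cyc {I : Ideal R} {y : R} (hy : y ∈ I) : y • 𝟙 (cyc I) = 0 := by
  refine ModuleCat.hom_ext (Submodule.linearMap_qext _ (LinearMap.ext fun x => ?_))
  exact (Submodule.Quotient.mk_eq_zero I).2 (Ideal.mul_mem_right _ _ hy)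

/-- If `f` is a nonzerodivisor on `R/I` and kills `R/N`, then multiplication by `f` is zero on
`Ext(R/I, R/N)`, so the connecting map `Ext^r(R/I, R/N) → Ext^{r+1}(R/(I + (f)), R/N)` is
injective. -/
theorem ext_cyc_step (I L N : Ideal R) (f : R) (hJ : ∀ x, x ∈ I ↔ f * x ∈ I)
    (hL : L = I ⊔ Ideal.span {f}) (hf : f ∈ N) {r : ℕ}
    (h : ∃ e : Ext (cyc I) (cyc N) r, e ≠ 0) : ∃ e : Ext (cyc L) (cyc N) (r + 1), e ≠ 0 := by
  obtain ⟨e, he⟩ := h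
  have hS := colonComplex_shortExact I I L f hJ hL
  refine ⟨hS.extClass.comp e (add_comm _ _), fun h0 => he ?_⟩
  obtain ⟨x₂, rfl⟩ := Ext.contravariant_sequence_exact₁ hS _ e (add_comm _ _) h0
  have hm : (colonComplex I I L f hJ hL).f = f • 𝟙 (cyc I) := by
    exact ModuleCat.hom_ext (Submodule.linearMap_qext _ (LinearMap.ext fun x => rfl))
  rw [hm, Ext.mk₀_smul]
  exact smul_comp_eq_zero _ _ _ _ (smul_id_cyc hf)

/-- If `y` kills `L/I` and acts as the identity on `R/N`, then `y` acts on `Ext(L/I, R/N)` both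
as `0` and as `1`. Hence this `Ext` vanishes and `Ext^r(R/L, R/N) → Ext^r(R/I, R/N)` is
injective. -/
theorem ext_lift (I L N : Ideal R) (hIL : I ≤ L) (y : R) (hy : ∀ x ∈ L, y * x ∈ I)
    (hyN : y - 1 ∈ N) {r : ℕ} (hr : 1 ≤ r)
    (h : ∃ e : Ext (cyc L) (cyc N) r, e ≠ 0) : ∃ e : Ext (cyc I) (cyc N) r, e ≠ 0 := by
  obtain ⟨e, he⟩ := h
  have hS := LinearMap.shortExact_shortComplexKer (Submodule.factor_surjective hIL)
  refine ⟨(Ext.mk₀ (ModuleCat.ofHom (Submodule.factor hIL))).comp e (zero_add _), fun h0 => he ?_⟩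
  obtain ⟨c, rfl⟩ := Ext.contravariant_sequence_exact₃ hS _ e h0
    (show 1 + (r - 1) = r by omega)
  have hc : c = 0 := by
    have h1 : c = y • c := by
      have := smul_id_cyc hyN
      rw [sub_smul, one_smul, sub_eq_zero] at this
      conv_lhs => rw [← c.comp_mk₀_id, ← this, Ext.mk₀_smul, Ext.comp_smul, c.comp_mk₀_id]
    have h2 : y • 𝟙 (ModuleCat.of R (LinearMap.ker (Submodule.factor hIL))) = 0 := by
      ext ⟨x, hx⟩
      obtain ⟨x, rfl⟩ := Submodule.Quotient.mk_surjective _ x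
      refine (Submodule.Quotient.mk_eq_zero I).2 (hy x ?_)
      exact (Submodule.Quotient.mk_eq_zero L).1 hx
    rw [h1, ← c.mk₀_id_comp]
    erw [← Ext.smul_comp, ← Ext.mk₀_smul, h2]
    rw [Ext.mk₀_zero, Ext.zero_comp]
  rw [hc, Ext.comp_zero]

end

/-! ### Monomial ideals -/

section
variable {K : Type} [Field K] {n : ℕ}

/-- The monomial ideal generated by the monomials with exponent vectors in `E`. -/
noncomputable abbrev monoIdeal (K : Type) [Field K] {n : ℕ} (E : Finset (Fin n →₀ ℕ)) :
    Ideal (MvPolynomial (Fin n) K) :=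
  Ideal.span ((fun s => MvPolynomial.monomial s (1 : K)) '' (E : Set (Fin n →₀ ℕ)))

/-- The colon ideal `(I : x^s)` of a monomial ideal is generated by the monomials
`x^{e - s} = x^e / gcd(x^e, x^s)`, with truncated subtraction of exponents. -/
theorem mem_monoIdeal_image_tsub (E : Finset (Fin n →₀ ℕ)) (s : Fin n →₀ ℕ)
    (x : MvPolynomial (Fin n) K) :
    x ∈ monoIdeal K (E.image (· - s)) ↔ MvPolynomial.monomial s 1 * x ∈ monoIdeal K E := by
  rw [MvPolynomial.mem_ideal_span_monomial_image, MvPolynomial.mem_ideal_span_monomial_image]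
  simp only [MvPolynomial.mem_support_iff, Finset.mem_coe, Finset.mem_image,
    exists_exists_and_eq_and, tsub_le_iff_left]
  constructor
  · intro h u hu
    rw [MvPolynomial.coeff_monomial_mul', one_mul, ne_eq, ite_eq_right_iff, Classical.not_imp] at hu
    simpa [add_tsub_cancel_of_le hu.1] using h _ hu.2
  · intro h u hu
    exact h (s + u) (by simpa [MvPolynomial.coeff_monomial_mul] using hu)

theorem monoIdeal_insert (E : Finset (Fin n →₀ ℕ)) (s : Fin n →₀ ℕ) :
    monoIdeal K (insert s E) = monoIdeal K E ⊔ Ideal.span {MvPolynomial.monomial s 1} := by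
  rw [monoIdeal, Finset.coe_insert, Set.image_insert_eq, Ideal.span_insert, sup_comm]

/-- A monomial ideal with `m` generators has `projdim S/I ≤ m`. With `I'` the ideal of the
generators other than `x^s`, both `I'` and `(I' : x^s)` have at most `m - 1` generators, and
`0 → S/(I' : x^s) → S/I' → S/I → 0` is exact. -/
theorem pdLE_monoIdeal (m : ℕ) (E : Finset (Fin n →₀ ℕ)) (hE : E.card ≤ m) :
    HasProjectiveDimensionLE (cyc (monoIdeal K E)) m := by
  induction m generalizing E with
  | zero =>
    obtain rfl : E = ∅ := by simpa using hE
    rw [← projective_iff_hasProjectiveDimensionLE_zero, ← IsProjective.iff_projective]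
    have h : monoIdeal K (∅ : Finset (Fin n →₀ ℕ)) = ⊥ := by simp [monoIdeal]
    exact Module.Projective.of_equiv (Submodule.quotEquivOfEqBot _ h).symm
  | succ m ih =>
    obtain rfl | ⟨s, hs⟩ := E.eq_empty_or_nonempty
    · have := ih ∅ (by simp)
      exact hasProjectiveDimensionLT_of_ge _ (m + 1) _ (by omega)
    · have hc := Finset.card_erase_of_mem hs
      have h₂ := ih (E.erase s) (by omega)
      have h₁ := ih ((E.erase s).image (· - s)) (Finset.card_image_le.trans (by omega))
      have hS := colonComplex_shortExact (monoIdeal K (E.erase s)) _ (monoIdeal K E) _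
        (mem_monoIdeal_image_tsub (E.erase s) s)
        (by rw [← monoIdeal_insert, Finset.insert_erase hs])
      exact hS.hasProjectiveDimensionLT_X₃ (m + 1) h₁
        (hasProjectiveDimensionLT_of_ge _ (m + 1) _ (by omega))

/-- The exponent vectors of the variables `X t`, `t ∈ T`. -/
noncomputable abbrev varExps (T : Finset (Fin n)) : Finset (Fin n →₀ ℕ) :=
  T.image fun t => Finsupp.single t 1

/-- The variables `X t`, `t ∈ T`, form a regular sequence; if they all lie in a proper ideal `N`
then `Ext^{|T|}(S/(X t : t ∈ T), S/N) ≠ 0`. -/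
theorem ext_vars_ne_zero (N : Ideal (MvPolynomial (Fin n) K)) (hN : N ≠ ⊤) (T : Finset (Fin n))
    (hT : ∀ t ∈ T, MvPolynomial.X t ∈ N) :
    ∃ e : Ext (cyc (monoIdeal K (varExps T))) (cyc N) T.card, e ≠ 0 := by
  induction T using Finset.induction_on with
  | empty =>
    have hle : monoIdeal K (varExps (∅ : Finset (Fin n))) ≤ N := by simp [monoIdeal]
    refine ⟨Ext.mk₀ (ModuleCat.ofHom (Submodule.factor hle)), fun h => hN ?_⟩
    have h := (Ext.mk₀_eq_zero_iff _).1 h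
    have h1 := DFunLike.congr_fun (congrArg ModuleCat.Hom.hom h) (Submodule.Quotient.mk 1)
    exact (Ideal.eq_top_iff_one N).2 ((Submodule.Quotient.mk_eq_zero N).1 h1)
  | insert t T ht ih =>
    rw [Finset.card_insert_of_notMem ht]
    refine ext_cyc_step (monoIdeal K (varExps T)) _ N (MvPolynomial.monomial (Finsupp.single t 1) 1)
      (fun x => ?_) ?_ (hT t (by simp)) (ih fun s hs => hT s (by simp [hs]))
    · rw [← mem_monoIdeal_image_tsub, varExps, Finset.image_image]
      have : Finset.image ((· - Finsupp.single t 1) ∘ fun t => Finsupp.single t 1) T =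
          Finset.image (fun t => Finsupp.single t 1) T := by
        refine Finset.image_congr fun s hs => ?_
        have hst : s ≠ t := fun h => ht (h ▸ hs)
        ext u
        simp only [Function.comp, Finsupp.tsub_apply, Finsupp.single_apply]
        grind
      rw [this]
    · rw [← monoIdeal_insert, varExps, Finset.image_insert]

/-- Generating monomials that all have the same degree do not divide one another, so they are
exactly the minimal monomial generators. -/
theorem minimalGens_monoIdeal (E : Finset (Fin n →₀ ℕ)) (d : ℕ) (hE : ∀ s ∈ E, s.degree = d) :
    {m | IsMinimalMonomialGen (monoIdeal K E) m} =
      (fun s => MvPolynomial.monomial s (1 : K)) '' (E : Set (Fin n →₀ ℕ)) := by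
  have hmem (s : Fin n →₀ ℕ) : MvPolynomial.monomial s (1 : K) ∈ monoIdeal K E ↔
      ∃ t ∈ E, t ≤ s := by
    rw [MvPolynomial.mem_ideal_span_monomial_image]
    simp
  have hdvd {s t : Fin n →₀ ℕ} : MvPolynomial.monomial s (1 : K) ∣ MvPolynomial.monomial t 1 ↔
      s ≤ t := by
    simp [MvPolynomial.monomial_dvd_monomial]
  ext m
  constructor
  · rintro ⟨⟨s, rfl⟩, hs, hmin⟩
    obtain ⟨t, ht, hts⟩ := (hmem s).1 hs
    exact ⟨t, ht, hmin _ ⟨t, rfl⟩ ((hmem t).2 ⟨t, ht, le_rfl⟩) (hdvd.2 hts)⟩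
  · rintro ⟨s, hs, rfl⟩
    refine ⟨⟨s, rfl⟩, (hmem s).2 ⟨s, hs, le_rfl⟩, ?_⟩
    rintro _ ⟨t, rfl⟩ ht hts
    obtain ⟨r, hr, hrt⟩ := (hmem t).1 ht
    have hts := hdvd.1 hts
    have hrs : r + (s - r) = s := add_tsub_cancel_of_le (hrt.trans hts)
    have h0 : (s - r).degree = 0 := by
      have := congrArg Finsupp.degree hrs
      rw [map_add, hE r hr, hE s hs] at this
      omega
    rw [Finsupp.degree_eq_zero_iff] at h0
    rw [h0, add_zero] at hrs
    rw [le_antisymm hts (hrs ▸ hrt)]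

end

/-! ### The lexsegment edge ideal -/

section
variable {n : ℕ}

/-- The positions (0-based) of the variables `x_3, …, x_k, x_i, …, x_n`, each of which divides
exactly one generator of the lexsegment ideal. -/
def genVars (n i k : ℕ) : Finset (Fin n) :=
  Finset.univ.filter fun t => i ≤ t.1 + 1 ∨ 3 ≤ t.1 + 1 ∧ t.1 + 1 ≤ k

theorem card_genVars {i k : ℕ} (hk3 : 3 ≤ k) (hki : k < i) (hin : i ≤ n) :
    (genVars n i k).card = n + k - i - 1 := by
  have h : (genVars n i k).map Fin.valEmbedding = Finset.Ico (i - 1) n ∪ Finset.Ico 2 k := by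
    ext a
    simp only [genVars, Finset.mem_map, Finset.mem_filter, Finset.mem_univ, true_and,
      Fin.valEmbedding_apply, Finset.mem_union, Finset.mem_Ico]
    constructor
    · rintro ⟨t, ht, rfl⟩
      omega
    · intro h
      exact ⟨⟨a, by omega⟩, by dsimp; omega, rfl⟩
  rw [← Finset.card_map Fin.valEmbedding, h, Finset.card_union_of_disjoint]
  · simp only [Nat.card_Ico]
    omega
  · rw [Finset.disjoint_left]
    intro a
    simp only [Finset.mem_Ico]
    omega

/-- The exponent vector of the generator divisible by the variable at position `t`: it is
`x₁ x_{t+1}` when `i ≤ t + 1`, and `x₂ x_{t+1}` otherwise. -/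
noncomputable def genExp (i : ℕ) (x₁ x₂ : Fin n) (t : Fin n) : Fin n →₀ ℕ :=
  Finsupp.single (if i ≤ t.1 + 1 then x₁ else x₂) 1 + Finsupp.single t 1

theorem lexSegIdeal_eq (K : Type) [Field K] {i k : ℕ} (hk3 : 3 ≤ k) (hki : k < i) (hin : i ≤ n) :
    lexSegIdeal K n (1, i) (2, k) =
      monoIdeal K ((genVars n i k).image (genExp i ⟨0, by omega⟩ ⟨1, by omega⟩)) := by
  have hX (t : Fin n) : xv K n (t.1 + 1) = MvPolynomial.X t := by
    simp [xv]
  have h1 : xv K n 1 = MvPolynomial.X ⟨0, by omega⟩ := hX ⟨0, by omega⟩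
  have h2 : xv K n 2 = MvPolynomial.X ⟨1, by omega⟩ := hX ⟨1, by omega⟩
  have hg (t : Fin n) : MvPolynomial.monomial (genExp i ⟨0, by omega⟩ ⟨1, by omega⟩ t) (1 : K) =
      xv K n (if i ≤ t.1 + 1 then 1 else 2) * xv K n (t.1 + 1) := by
    rw [hX, genExp]
    split_ifs
    · simp [h1, MvPolynomial.X, MvPolynomial.monomial_mul]
    · simp [h2, MvPolynomial.X, MvPolynomial.monomial_mul]
  unfold lexSegIdeal monoIdeal
  congr 1
  ext m
  simp only [Finset.coe_image, Set.mem_image, SetLike.mem_coe, exists_exists_and_eq_and, hg,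
    lexSegSet, validPair, lexGE, Set.mem_ofPred_eq, genVars, Finset.mem_filter, Finset.mem_univ,
    true_and]
  constructor
  · rintro ⟨⟨a, b⟩, h, rfl⟩
    dsimp only at h ⊢
    refine ⟨⟨b - 1, by omega⟩, by dsimp only; omega, ?_⟩
    have hb : b - 1 + 1 = b := by omega
    dsimp only
    rw [hb]
    congr 2
    split_ifs <;> omega
  · rintro ⟨t, ht, rfl⟩
    refine ⟨(if i ≤ t.1 + 1 then 1 else 2, t.1 + 1), ?_, rfl⟩
    dsimp only
    have := t.2
    split_ifs <;> omega

/-- The variable at position `t ≥ 2` is recovered from its generator, because `x₁` and `x₂` sit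
at positions below `2`. -/
theorem genExp_injOn {i k : ℕ} (hki : k < i) (hk3 : 3 ≤ k) (x₁ x₂ : Fin n) (h₁ : x₁.1 < 2)
    (h₂ : x₂.1 < 2) : Set.InjOn (genExp i x₁ x₂) (genVars n i k : Set (Fin n)) := by
  intro s hs t ht hst
  simp only [genVars, Finset.coe_filter, Finset.mem_univ, true_and, Set.mem_ofPred_eq] at hs ht
  have h := DFunLike.congr_fun hst s
  simp only [genExp, Finsupp.add_apply, Finsupp.single_apply] at h
  split_ifs at h <;> grind

end

/-- For the lexsegment edge ideal `I = (L(x_1 x_i, x_2 x_k))`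
with `3 ≤ k < i ≤ n` and `v >_lex x_{i-1} x_n`, one has
`projdim_S(S/I) = n + k - i - 1`, which equals the number of minimal monomial
generators of `I`. -/
theorem lexSegIdeal_projDim_eq_numGens (K : Type) [Field K] (n i k : ℕ)
    (hk3 : 3 ≤ k) (hki : k < i) (hin : i ≤ n)
    (hv : lexGT (2, k) (i - 1, n)) :
    projDim (ModuleCat.of (MvPolynomial (Fin n) K)
        (MvPolynomial (Fin n) K ⧸ lexSegIdeal K n (1, i) (2, k))) = n + k - i - 1 ∧
      {m : MvPolynomial (Fin n) K |
        IsMinimalMonomialGen (lexSegIdeal K n (1, i) (2, k)) m}.ncard = n + k - i - 1 := by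
  have hI := lexSegIdeal_eq K hk3 hki hin
  set x₁ : Fin n := ⟨0, by omega⟩
  set x₂ : Fin n := ⟨1, by omega⟩
  set T := genVars n i k with hT
  have hTc : T.card = n + k - i - 1 := card_genVars hk3 hki hin
  set E := T.image (genExp i x₁ x₂) with hE
  have hEc : E.card = n + k - i - 1 := by
    rw [hE, Finset.card_image_of_injOn
      (genExp_injOn hki hk3 x₁ x₂ (by simp [x₁]) (by simp [x₂])), hTc]
  rw [hI]
  refine ⟨?_, ?_⟩
  · have hub : n + k - i - 1 ∈ {d : ℕ | ∃ P : ProjectiveResolution (cyc (monoIdeal K E)),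
        ∀ j : ℕ, d < j → IsZero (P.complex.X j)} :=
      exists_resolution_of_pdLE _ _ (pdLE_monoIdeal _ E hEc.le)
    refine le_antisymm (Nat.sInf_le hub) (le_csInf ⟨_, hub⟩ ?_)
    rintro d ⟨P, hP⟩
    -- The kernel of `ev` is the maximal ideal `N` of the point `(1, 1, 0, …, 0)`: it contains
    -- the variables in `T`, while `x₁ x₂` acts as the identity on `S/N`.
    let ev : MvPolynomial (Fin n) K →+* K :=
      MvPolynomial.eval fun j => if j.1 < 2 then 1 else 0
    have hvars : ∀ t ∈ T, MvPolynomial.X t ∈ RingHom.ker ev := by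
      intro t ht
      simp only [hT, genVars, Finset.mem_filter, Finset.mem_univ, true_and] at ht
      have ht2 : 1 < t.1 := by omega
      simpa [ev, RingHom.mem_ker] using ht2
    have hext := ext_vars_ne_zero (RingHom.ker ev) (RingHom.ker_ne_top ev) T hvars
    have hle : monoIdeal K E ≤ monoIdeal K (varExps T) := by
      rw [monoIdeal, Ideal.span_le]
      rintro _ ⟨s, hs, rfl⟩
      obtain ⟨t, ht, rfl⟩ := Finset.mem_image.1 (Finset.mem_coe.1 hs)
      refine MvPolynomial.mem_ideal_span_monomial_image.2 fun u hu => ?_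
      obtain rfl : genExp i x₁ x₂ t = u := by simpa using hu
      exact ⟨Finsupp.single t 1, Finset.mem_coe.2 (Finset.mem_image_of_mem _ ht), le_add_self⟩
    have hkill : ∀ x ∈ monoIdeal K (varExps T),
        MvPolynomial.X x₁ * MvPolynomial.X x₂ * x ∈ monoIdeal K E := by
      suffices h : monoIdeal K (varExps T) ≤ Submodule.comap
          (LinearMap.mulLeft (MvPolynomial (Fin n) K) (MvPolynomial.X x₁ * MvPolynomial.X x₂))
          (monoIdeal K E) from h
      refine Submodule.span_le.2 ?_
      rintro _ ⟨s, hs, rfl⟩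
      obtain ⟨t, ht, rfl⟩ := Finset.mem_image.1 (Finset.mem_coe.1 hs)
      have hmem : MvPolynomial.monomial (genExp i x₁ x₂ t) (1 : K) ∈ monoIdeal K E :=
        Ideal.subset_span ⟨_, Finset.mem_coe.2 (Finset.mem_image_of_mem _ ht), rfl⟩
      change MvPolynomial.X x₁ * MvPolynomial.X x₂ * MvPolynomial.X t ∈ monoIdeal K E
      have hgen : MvPolynomial.monomial (genExp i x₁ x₂ t) (1 : K) =
          MvPolynomial.X (if i ≤ t.1 + 1 then x₁ else x₂) * MvPolynomial.X t := by
        simp [genExp, MvPolynomial.X, MvPolynomial.monomial_mul]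
      rw [hgen] at hmem
      split_ifs at hmem
      · convert Ideal.mul_mem_left _ (MvPolynomial.X x₂) hmem using 1
        ring
      · convert Ideal.mul_mem_left _ (MvPolynomial.X x₁) hmem using 1
        ring
    have hone : MvPolynomial.X x₁ * MvPolynomial.X x₂ - 1 ∈ RingHom.ker ev := by
      simp [ev, RingHom.mem_ker, x₁, x₂]
    obtain ⟨e, he⟩ := ext_lift _ _ _ hle _ hkill hone (by omega) hext
    exact hTc ▸ resolution_length e he P hP
  · rw [minimalGens_monoIdeal E 2, Set.ncard_image_of_injective, Set.ncard_coe_finset, hEc]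
    · exact MvPolynomial.monomial_left_injective one_ne_zero
    · intro s hs
      obtain ⟨t, -, rfl⟩ := Finset.mem_image.1 hs
      simp [genExp, Finsupp.degree_single]
end

section
/- (Schmitt–Vogel Lemma) Let I ⊂ S = K[x_1,…,x_n] be a squarefree monomial ideal and let A_1,…,A_r be subsets of the set of monomials of I such that: (SV1) |A_1| = 1 and each A_i is finite; (SV2) A_1 ∪ ⋯ ∪ A_r contains the set of minimal monomial generators of I; (SV3) for each i ≥ 2 and any two distinct monomials m_1, m_2 ∈ A_i there exist j < i and m′ ∈ A_j with m′ | m_1 m_2. Set g_i = Σ_{m ∈ A_i} m for 1 ≤ i ≤ r. Then √(g_1,…,g_r) = I; in particular, ara(I) ≤ r. -/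
/-!
The radical of `(g_1,…,g_r)` is the intersection of the primes containing all the `g_i`. It is
contained in `I` once `I` is radical, and contains `I` once each such prime does.

* A squarefree monomial ideal is radical (`isRadical_span_sqFree`). If `f ∉ I`, some exponent `s`
  of `f` has `x^s ∉ I`. The substitution sending to zero every variable absent from `x^s` kills
  each squarefree generator of `I`, since such a generator does not divide `x^s` and hence involves
  an absent variable. It preserves the `x^s`-coefficient of `f`. Its target is a domain, so no
  power of `f` lies in `I`.
* A prime `P` containing all the sums `g_i` contains all the `A_i` (`subset_prime_of_sums_mem`),
  by strong induction on `i`: for `m ∈ A_i`, modulo `P` every product `m m'` with `m' ≠ m` in `A_i`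
  vanishes by (SV3), vacuously for the singleton `A_1`, so `m g_i ≡ m²`, whence `m² ∈ P` and `m ∈ P`. By (SV2) and
  `exists_minimalMonomialGen_dvd`, every monomial of `I` is a multiple of an element of some `A_i`,
  so `I ≤ P`.
-/

open MvPolynomial

/-- The substitution setting to zero the variables not occurring in `x^s`. -/
noncomputable def killOutside (K : Type) [Field K] {n : ℕ} (s : Fin n →₀ ℕ) :
    MvPolynomial (Fin n) K →ₐ[K] MvPolynomial (Fin n) K :=
  aeval fun i => if s i = 0 then 0 else X i

lemma coeff_killOutside {K : Type} [Field K] {n : ℕ} (s : Fin n →₀ ℕ)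
    (f : MvPolynomial (Fin n) K) : coeff s (killOutside K s f) = coeff s f := by
  induction f using MvPolynomial.induction_on' with
  | add p q hp hq => rw [map_add, coeff_add, coeff_add, hp, hq]
  | monomial u a =>
    rw [killOutside, aeval_monomial, algebraMap_eq]
    by_cases h : ∃ i, u i ≠ 0 ∧ s i = 0
    · obtain ⟨i, hu, hs⟩ := h
      have hus : u ≠ s := fun e => hu (e ▸ hs)
      rw [Finsupp.prod, Finset.prod_eq_zero (Finsupp.mem_support_iff.mpr hu) (by simp [hs, hu]),
        mul_zero, coeff_zero, coeff_monomial, if_neg hus]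
    · push Not at h
      rw [monomial_eq]
      congr 2
      refine Finset.prod_congr rfl fun i hi => ?_
      simp only [if_neg (h i (Finsupp.mem_support_iff.mp hi))]

/-- A squarefree monomial not dividing `x^s` involves a variable absent from `x^s`. -/
lemma killOutside_eq_zero {K : Type} [Field K] {n : ℕ} (s : Fin n →₀ ℕ)
    {m : MvPolynomial (Fin n) K} (hm : IsSqFreeMonomial m) (hs : ¬ m ∣ monomial s 1) :
    killOutside K s m = 0 := by
  obtain ⟨t, rfl⟩ := hm
  by_cases h : ∃ i ∈ t, s i = 0
  · obtain ⟨i, hi, h0⟩ := h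
    rw [map_prod]
    exact Finset.prod_eq_zero hi (by simp [killOutside, h0])
  · push Not at h
    refine absurd ?_ hs
    have : (t.prod fun i => (X i : MvPolynomial (Fin n) K))
        = monomial (∑ i ∈ t, Finsupp.single i 1) 1 := by
      rw [monomial_sum_one]; rfl
    rw [this, monomial_one_dvd_monomial_one]
    intro j
    rw [Finsupp.finsetSum_apply]
    simp only [Finsupp.single_apply, Finset.sum_ite_eq']
    split_ifs with hj
    · exact Nat.one_le_iff_ne_zero.mpr (h j hj)
    · exact Nat.zero_le _

/-- Squarefree monomial ideals are radical. -/
lemma isRadical_span_sqFree {K : Type} [Field K] {n : ℕ} {G : Set (MvPolynomial (Fin n) K)}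
    (hG : ∀ m ∈ G, IsSqFreeMonomial m) : (Ideal.span G).IsRadical := by
  rintro f ⟨k, hk⟩
  by_contra hf
  obtain ⟨s, hs, hsI⟩ : ∃ s ∈ f.support, monomial s (1 : K) ∉ Ideal.span G := by
    by_contra! h
    apply hf
    rw [← support_sum_monomial_coeff f]
    refine Ideal.sum_mem _ fun s hs => ?_
    have := Ideal.mul_mem_left _ (C (coeff s f)) (h s hs)
    rwa [C_mul_monomial, mul_one] at this
  have hker : Ideal.span G ≤ RingHom.ker (killOutside K s) :=
    Ideal.span_le.mpr fun m hm => killOutside_eq_zero s (hG m hm) fun hd =>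
      hsI (Ideal.mem_of_dvd _ hd (Ideal.subset_span hm))
  have h0 : killOutside K s f = 0 := by
    have := hker hk
    rw [RingHom.mem_ker, map_pow] at this
    exact eq_zero_of_pow_eq_zero this
  rw [mem_support_iff, ← coeff_killOutside, h0, coeff_zero] at hs
  exact hs rfl

lemma exists_minimalMonomialGen_dvd {K : Type} [Field K] {n : ℕ}
    {I : Ideal (MvPolynomial (Fin n) K)} {m : MvPolynomial (Fin n) K} (hm : IsMonomial m)
    (hmI : m ∈ I) : ∃ m', IsMinimalMonomialGen I m' ∧ m' ∣ m := by
  obtain ⟨s, rfl⟩ := hm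
  obtain ⟨u, hus, hu⟩ := exists_minimal_le_of_wellFoundedLT
    (fun u : Fin n →₀ ℕ => monomial u (1 : K) ∈ I) s hmI
  refine ⟨monomial u 1, ⟨⟨u, rfl⟩, hu.1, ?_⟩, monomial_one_dvd_monomial_one.mpr hus⟩
  rintro _ ⟨v, rfl⟩ hv hvu
  have hle := monomial_one_dvd_monomial_one.mp hvu
  rw [le_antisymm hle (hu.2 hv hle)]

/-- The inductive core of the Schmitt–Vogel lemma, valid in any commutative ring: the instance
`i = 0` of `hSV` says that the first set has at most one element. -/
lemma subset_prime_of_sums_mem {R : Type*} [CommRing R] {r : ℕ} (A : Fin r → Finset R)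
    (hSV : ∀ i, ∀ m₁ ∈ A i, ∀ m₂ ∈ A i, m₁ ≠ m₂ → ∃ j < i, ∃ m' ∈ A j, m' ∣ m₁ * m₂)
    (P : Ideal R) [P.IsPrime] (hP : ∀ i, (A i).sum id ∈ P) (i : Fin r) :
    ∀ m ∈ A i, m ∈ P := by
  classical
  induction i using WellFoundedLT.induction with
  | ind i ih =>
    intro m hm
    have hrest : m * ((A i).erase m).sum id ∈ P := by
      rw [Finset.mul_sum]
      refine Ideal.sum_mem _ fun m₂ h₂ => ?_
      obtain ⟨hne, h₂⟩ := Finset.mem_erase.mp h₂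
      obtain ⟨j, hj, m', hm', hd⟩ := hSV i m hm m₂ h₂ hne.symm
      exact Ideal.mem_of_dvd _ hd (ih j hj m' hm')
    have hsq : m * m + m * ((A i).erase m).sum id ∈ P := by
      rw [← mul_add]
      have := P.mul_mem_left m (hP i)
      rwa [← Finset.add_sum_erase _ _ hm] at this
    exact (Ideal.IsPrime.mem_or_mem ‹_› ((Ideal.add_mem_iff_left P hrest).mp hsq)).elim id id

/-- **Schmitt–Vogel Lemma.** Let `I` be a squarefree monomial
ideal and `A_1,…,A_r` finite sets of monomials of `I` with `|A_1| = 1`, whose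
union contains all minimal monomial generators of `I`, and such that for `i ≥ 2`
and distinct `m₁, m₂ ∈ A_i` there are `j < i` and `m' ∈ A_j` with `m' ∣ m₁ m₂`.
Then, with `g_i = Σ_{m ∈ A_i} m`, one has `√(g_1,…,g_r) = I`; in particular
`ara(I) ≤ r`. -/
theorem schmitt_vogel (K : Type) [Field K] (n : ℕ)
    (I : Ideal (MvPolynomial (Fin n) K))
    (hI : ∃ G : Set (MvPolynomial (Fin n) K),
      (∀ m ∈ G, IsSqFreeMonomial m) ∧ I = Ideal.span G)
    (r : ℕ) (hr : 0 < r) (A : Fin r → Finset (MvPolynomial (Fin n) K))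
    (hmem : ∀ i : Fin r, ∀ m ∈ A i, IsMonomial m ∧ m ∈ I)
    (hSV1 : (A ⟨0, hr⟩).card = 1)
    (hSV2 : ∀ m, IsMinimalMonomialGen I m → ∃ i : Fin r, m ∈ A i)
    (hSV3 : ∀ i : Fin r, 0 < (i : ℕ) → ∀ m₁ ∈ A i, ∀ m₂ ∈ A i, m₁ ≠ m₂ →
      ∃ j : Fin r, j < i ∧ ∃ m' ∈ A j, m' ∣ m₁ * m₂) :
    (Ideal.span (Set.range fun i : Fin r => (A i).sum id)).radical = I ∧
      ara I ≤ r := by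
  obtain ⟨G, hG, rfl⟩ := hI
  have hmain : (Ideal.span (Set.range fun i : Fin r => (A i).sum id)).radical = Ideal.span G := by
    apply le_antisymm
    · refine (isRadical_span_sqFree hG).radical_le_iff.mpr (Ideal.span_le.mpr ?_)
      rintro _ ⟨i, rfl⟩
      exact Ideal.sum_mem _ fun m hm => (hmem i m hm).2
    · rw [Ideal.radical_eq_sInf]
      refine le_sInf fun P ⟨hP, hprime⟩ => Ideal.span_le.mpr fun m hm => ?_
      have hmon : IsMonomial m := by
        obtain ⟨t, rfl⟩ := hG m hm
        exact ⟨∑ i ∈ t, Finsupp.single i 1, by rw [monomial_sum_one]; rfl⟩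
      obtain ⟨m', hm', hd⟩ := exists_minimalMonomialGen_dvd hmon (Ideal.subset_span hm)
      obtain ⟨i, hi⟩ := hSV2 m' hm'
      refine Ideal.mem_of_dvd P hd (subset_prime_of_sums_mem A ?_ P
        (fun i => hP (Ideal.subset_span ⟨i, rfl⟩)) i m' hi)
      intro i m₁ h₁ m₂ h₂ hne
      rcases Nat.eq_zero_or_pos (i : ℕ) with h0 | hpos
      · obtain rfl : i = ⟨0, hr⟩ := Fin.ext h0
        exact absurd (Finset.card_le_one.mp hSV1.le m₁ h₁ m₂ h₂) hne
      · exact hSV3 i hpos m₁ h₁ m₂ h₂ hne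
  refine ⟨hmain, Nat.sInf_le ⟨fun i => (A i).sum id, fun i => ?_, ?_⟩⟩
  · exact Ideal.sum_mem _ fun m hm => (hmem i m hm).2
  · rw [hmain, (isRadical_span_sqFree hG).radical]
end

section
/- Let I = (L(u,v)) ⊂ S = K[x_1,…,x_n] be the lexsegment edge ideal determined by u = x_1 x_i with 3 ≤ i ≤ n and v = x_j x_k with 2 ≤ j ≤ n − 2 and j < k ≤ n, where u >_lex v. Then the squarefree shadow of L(u,v), i.e., the set of all squarefree monomials of degree 3 divisible by some element of L(u,v), is itself a lexsegment set of squarefree degree-3 monomials if and only if j ≥ i − 2. -/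
/-!
A sorted triple with least index `p ≥ 2` lies in the shadow exactly when `p < j`, or `p = j` and
its middle index is at most `k`; these triples form a lex-initial segment of those with `p ≥ 2`,
whose last element is `(j, min k (n - 1), n)`. A triple `(1, q, r)` lies in the shadow exactly when
`r ≥ i`, or `q < j`, or `q = j` and `r ≤ k`.

If `i - 2 ≤ j`, then `r < i` forces `q < j` or `(q, r) = (j, j + 1)`, so every `(1, q, r)` is in
the shadow, which is therefore the segment from `(1, 2, 3)` to `(j, min k (n - 1), n)`.
If `j < i - 2`, the triple `(1, i - 2, i - 1)` is missing, although it lies between `(1, 2, 3)` and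
`(2, 3, 4)`, both of which are divisible by `x_2 x_3` and hence lie in the shadow.
-/


open MvPolynomial

/-- Sorted index triples in range `1,…,n`; these correspond exactly to the
squarefree monomials of degree 3 of `K[x_1,…,x_n]`. -/
def validTriple (n : ℕ) (t : ℕ × ℕ × ℕ) : Prop :=
  1 ≤ t.1 ∧ t.1 < t.2.1 ∧ t.2.1 < t.2.2 ∧ t.2.2 ≤ n

/-- `lexGE3 p q` : for sorted index triples, the squarefree degree-3 monomial
indexed by `p` is ≥ the one indexed by `q` in the lexicographic order induced
by `x_1 > x_2 > ⋯ > x_n`. -/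
def lexGE3 (p q : ℕ × ℕ × ℕ) : Prop :=
  p.1 < q.1 ∨ (p.1 = q.1 ∧ (p.2.1 < q.2.1 ∨ (p.2.1 = q.2.1 ∧ p.2.2 ≤ q.2.2)))

/-- The squarefree degree-2 monomial indexed by `w` divides the squarefree
degree-3 monomial indexed by `t`. -/
def pairDvdTriple (w : ℕ × ℕ) (t : ℕ × ℕ × ℕ) : Prop :=
  (w.1 = t.1 ∨ w.1 = t.2.1 ∨ w.1 = t.2.2) ∧ (w.2 = t.1 ∨ w.2 = t.2.1 ∨ w.2 = t.2.2)

/-- The squarefree shadow of `L(u,v)`: all squarefree degree-3 monomials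
(encoded as sorted triples) divisible by some element of `L(u,v)`. -/
def sqShadow (n : ℕ) (u v : ℕ × ℕ) : Set (ℕ × ℕ × ℕ) :=
  {t | validTriple n t ∧ ∃ w ∈ lexSegSet n u v, pairDvdTriple w t}

/-- For `j ≥ 2`, only one pair of indices needs testing for each way a triple can lie in the
shadow: `(p, r)` when the divisor involves `x_1`, `(q, r)` when `p = 1` and it does not, and
`(p, q)` when `p ≥ 2`. -/
theorem mem_sqShadow_iff {n i j k : ℕ} (hj : 2 ≤ j) {p q r : ℕ} :
    (p, q, r) ∈ sqShadow n (1, i) (j, k) ↔ validTriple n (p, q, r) ∧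
      (p = 1 ∧ (i ≤ r ∨ q < j ∨ q = j ∧ r ≤ k) ∨ 2 ≤ p ∧ (p < j ∨ p = j ∧ q ≤ k)) := by
  simp only [sqShadow, lexSegSet, validTriple, validPair, lexGE, pairDvdTriple, Set.mem_ofPred_eq]
  refine and_congr_right fun ht => ⟨?_, fun h => ?_⟩
  · rintro ⟨⟨a, b⟩, hab, ha | ha | ha, hb | hb | hb⟩ <;> dsimp only at * <;> omega
  · rcases h with ⟨hp, h | h⟩ | ⟨hp, h⟩
    · exact ⟨(p, r), by dsimp only; omega, by simp⟩
    · exact ⟨(q, r), by dsimp only; omega, by simp⟩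
    · exact ⟨(p, q), by dsimp only; omega, by simp⟩

/-- For `u = x_1 x_i` (`3 ≤ i ≤ n`) and `v = x_j x_k`
(`2 ≤ j ≤ n-2`, `j < k ≤ n`) with `u >_lex v`, the squarefree shadow of
`L(u,v)` is a lexsegment set of squarefree degree-3 monomials iff `j ≥ i - 2`. -/
theorem sqShadow_lexseg_iff (n i j k : ℕ)
    (hi3 : 3 ≤ i) (hin : i ≤ n) (hj : 2 ≤ j) (hjn : j ≤ n - 2) (hjk : j < k)
    (hkn : k ≤ n) (huv : lexGT (1, i) (j, k)) :
    (∃ a b : ℕ × ℕ × ℕ, validTriple n a ∧ validTriple n b ∧ lexGE3 a b ∧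
        sqShadow n (1, i) (j, k) = {t | validTriple n t ∧ lexGE3 a t ∧ lexGE3 t b})
      ↔ i - 2 ≤ j := by
  constructor
  · rintro ⟨a, b, -, -, -, h⟩
    by_contra hlt
    have h1 : (1, 2, 3) ∈ sqShadow n (1, i) (j, k) :=
      (mem_sqShadow_iff hj).2 (by simp only [validTriple, true_and]; omega)
    have h2 : (2, 3, 4) ∈ sqShadow n (1, i) (j, k) :=
      (mem_sqShadow_iff hj).2 (by simp only [validTriple]; omega)
    have h3 : (1, i - 2, i - 1) ∉ sqShadow n (1, i) (j, k) := fun hm => by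
      have := (mem_sqShadow_iff hj).1 hm
      simp only [validTriple] at this
      omega
    rw [h] at h1 h2 h3
    simp only [Set.mem_ofPred_eq, validTriple, lexGE3] at h1 h2 h3
    omega
  · intro hij
    refine ⟨(1, 2, 3), (j, min k (n - 1), n), ?_, ?_, ?_, ?_⟩
    · simp only [validTriple]; omega
    · simp only [validTriple]; omega
    · simp only [lexGE3]; omega
    · ext ⟨p, q, r⟩
      rw [mem_sqShadow_iff hj]
      simp only [Set.mem_ofPred_eq, validTriple, lexGE3]
      omega
end

section
/- Let I = (L(u,v)) ⊂ S = K[x_1,…,x_n] be a lexsegment edge ideal determined by u = x_1 x_i with 3 ≤ i ≤ n and v = x_j x_k with 3 ≤ j < k ≤ n, where u >_lex v and v >_lex x_{i-1}x_n. Then the prime ideal (x_3, x_4, …, x_n) is a minimal prime ideal of I. -/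
/-!
Every generator `x_a x_b` (`a < b`) of `I` has `b ≥ 3`, because `x_1 x_2 > u`; hence
`P = (x_3, …, x_n)` contains `I`. Conversely `x_2 x_t ∈ I` for all `t ≥ 3`, as
`2` lies strictly between the leading indices `1` of `u` and `j ≥ 3` of `v`. A prime `Q` with
`I ≤ Q ≤ P` does not contain `x_2 ∉ P`, so it contains `x_3, …, x_n`, i.e. `Q = P`.

That `P` is prime, and that it contains no variable other than its generators, both come from
writing it as the kernel of the endomorphism which kills the generating variables and fixes the
others (`span_X_image_eq_ker`).
-/

open MvPolynomial

/-- The endomorphism of `R[σ]` sending the variables in `T` to `0` and fixing the others. -/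
noncomputable def killVars {σ : Type*} (R : Type*) [CommRing R] (T : Set σ) :
    MvPolynomial σ R →ₐ[R] MvPolynomial σ R :=
  open Classical in aeval fun s => if s ∈ T then 0 else X s

theorem killVars_X_of_mem {σ R : Type*} [CommRing R] {T : Set σ} {s : σ} (hs : s ∈ T) :
    killVars R T (X s) = 0 := by
  simp [killVars, hs]

theorem killVars_X_of_notMem {σ R : Type*} [CommRing R] {T : Set σ} {s : σ} (hs : s ∉ T) :
    killVars R T (X s) = X s := by
  simp [killVars, hs]

theorem span_X_image_eq_ker {σ R : Type*} [CommRing R] (T : Set σ) :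
    Ideal.span (X '' T : Set (MvPolynomial σ R)) = RingHom.ker (killVars R T) := by
  apply le_antisymm
  · rw [Ideal.span_le]
    rintro _ ⟨s, hs, rfl⟩
    exact killVars_X_of_mem hs
  · intro p hp
    -- Modulo the span, `killVars` is the identity, so `p` agrees there with `killVars p = 0`.
    have h : (Ideal.Quotient.mkₐ R (Ideal.span (X '' T : Set (MvPolynomial σ R)))).comp
        (killVars R T) = Ideal.Quotient.mkₐ R (Ideal.span (X '' T)) := by
      ext s
      by_cases hs : s ∈ T
      · have hX : (X s : MvPolynomial σ R) ∈ Ideal.span (X '' T : Set (MvPolynomial σ R)) :=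
          Ideal.subset_span ⟨s, hs, rfl⟩
        simp [killVars_X_of_mem hs, Ideal.Quotient.eq_zero_iff_mem.mpr hX]
      · simp [killVars_X_of_notMem hs]
    have hp' := DFunLike.congr_fun h p
    rw [AlgHom.comp_apply, (RingHom.mem_ker).mp hp, map_zero] at hp'
    exact Ideal.Quotient.eq_zero_iff_mem.mp hp'.symm

theorem isPrime_span_X_image {σ R : Type*} [CommRing R] [IsDomain R] (T : Set σ) :
    (Ideal.span (X '' T : Set (MvPolynomial σ R))).IsPrime := by
  rw [span_X_image_eq_ker]
  exact RingHom.ker_isPrime _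

theorem X_notMem_span_X_image {σ R : Type*} [CommRing R] [Nontrivial R] {T : Set σ} {s : σ}
    (hs : s ∉ T) : (X s : MvPolynomial σ R) ∉ Ideal.span (X '' T : Set (MvPolynomial σ R)) := by
  rw [span_X_image_eq_ker, RingHom.mem_ker, killVars_X_of_notMem hs]
  exact X_ne_zero s

theorem xv_image_eq (K : Type) [Field K] (n : ℕ) :
    (fun t => xv K n t) '' {t | 3 ≤ t ∧ t ≤ n} =
      (X '' {s : Fin n | 2 ≤ s.val} : Set (MvPolynomial (Fin n) K)) := by
  ext p
  constructor
  · rintro ⟨t, ⟨h3, hn⟩, rfl⟩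
    have h : t - 1 < n := by omega
    refine ⟨⟨t - 1, h⟩, ?_, by simp [xv, h]⟩
    change 2 ≤ t - 1
    omega
  · rintro ⟨s, hs, rfl⟩
    have hs' : 2 ≤ s.val := hs
    exact ⟨s.val + 1, ⟨by omega, s.isLt⟩, by simp [xv]⟩

/-- For the lexsegment edge ideal `I = (L(x_1 x_i, x_j x_k))`
with `3 ≤ i ≤ n`, `3 ≤ j < k ≤ n`, `u >_lex v` and `v >_lex x_{i-1} x_n`,
the prime ideal `(x_3, x_4, …, x_n)` is a minimal prime of `I`. -/
theorem lexSegIdeal_minimal_prime (K : Type) [Field K] (n i j k : ℕ)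
    (hi3 : 3 ≤ i) (hin : i ≤ n) (hj : 3 ≤ j) (hjk : j < k) (hkn : k ≤ n)
    (huv : lexGT (1, i) (j, k)) (hv : lexGT (j, k) (i - 1, n)) :
    Ideal.span ((fun t => xv K n t) '' {t | 3 ≤ t ∧ t ≤ n}) ∈
      (lexSegIdeal K n (1, i) (j, k)).minimalPrimes := by
  have hP := xv_image_eq K n
  have h2 : xv K n 2 ∉ Ideal.span ((fun t => xv K n t) '' {t | 3 ≤ t ∧ t ≤ n}) := by
    rw [hP, show xv K n 2 = X ⟨1, by omega⟩ from dif_pos (by omega)]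
    exact X_notMem_span_X_image (by simp)
  refine ⟨⟨?_, ?_⟩, ?_⟩
  · rw [hP]
    exact isPrime_span_X_image _
  · rw [lexSegIdeal, Ideal.span_le]
    rintro _ ⟨⟨a, b⟩, ⟨⟨ha, hab, hb⟩, hu, -⟩, rfl⟩
    simp only [lexGE] at ha hab hb hu
    exact Ideal.mul_mem_left _ _ (Ideal.subset_span ⟨b, ⟨by omega, hb⟩, rfl⟩)
  · rintro Q ⟨hQ, hIQ⟩ hQP
    rw [Ideal.span_le]
    rintro _ ⟨t, ⟨h3, hn⟩, rfl⟩
    have hmem : xv K n 2 * xv K n t ∈ lexSegIdeal K n (1, i) (j, k) := by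
      refine Ideal.subset_span ⟨(2, t), ⟨⟨?_, ?_, hn⟩, Or.inl ?_, Or.inl ?_⟩, rfl⟩ <;>
        simp only <;> omega
    exact (hQ.mem_or_mem (hIQ hmem)).resolve_left fun h => h2 (hQP h)
end

section
/- Let R be a commutative ring and a, b, f_1, f_2 ∈ R. Then the radical of the ideal (a f_1, a f_2 + b f_1, b f_2) equals the radical of the ideal (a f_1, a f_2, b f_1, b f_2); consequently √(a f_1, a f_2 + b f_1, b f_2) = √((f_1, f_2)·(a, b)). -/
/-- `a f₂` and `b f₁` are the roots of `t² - (a f₂ + b f₁) t + (a f₁)(b f₂)`, whose non-leading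
coefficients lie in the three-generator ideal, so both of them lie in its radical. -/
theorem radical_three_gens_eq_four {R : Type*} [CommRing R] (a b f₁ f₂ : R) :
    (Ideal.span {a * f₁, a * f₂ + b * f₁, b * f₂}).radical =
      (Ideal.span {a * f₁, a * f₂, b * f₁, b * f₂}).radical := by
  apply le_antisymm
  · apply Ideal.radical_mono
    rw [Ideal.span_le]
    rintro x (rfl | rfl | rfl)
    · exact Ideal.subset_span (by simp)
    · exact Ideal.add_mem _ (Ideal.subset_span (by simp)) (Ideal.subset_span (by simp))
    · exact Ideal.subset_span (by simp)
  · rw [Ideal.radical_le_radical_iff, Ideal.span_le]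
    set I := Ideal.span {a * f₁, a * f₂ + b * f₁, b * f₂} with hI
    have h₁ : a * f₁ ∈ I := Ideal.subset_span (by simp)
    have h₂ : a * f₂ + b * f₁ ∈ I := Ideal.subset_span (by simp)
    have h₃ : b * f₂ ∈ I := Ideal.subset_span (by simp)
    have root_mem (t : R)
        (ht : t ^ 2 = t * (a * f₂ + b * f₁) - (b * f₂) * (a * f₁)) : t ∈ I.radical :=
      ⟨2, ht ▸ I.sub_mem (I.mul_mem_left _ h₂) (I.mul_mem_left _ h₁)⟩
    rintro x (rfl | rfl | rfl | rfl)
    · exact Ideal.le_radical h₁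
    · exact root_mem _ (by ring)
    · exact root_mem _ (by ring)
    · exact Ideal.le_radical h₃

/-- In a commutative ring `R`, for `a, b, f₁, f₂ ∈ R` the
radical of `(a f₁, a f₂ + b f₁, b f₂)` equals the radical of
`(a f₁, a f₂, b f₁, b f₂)`; consequently it equals `√((f₁,f₂)·(a,b))`. -/
theorem radical_three_gens (R : Type) [CommRing R] (a b f₁ f₂ : R) :
    (Ideal.span {a * f₁, a * f₂ + b * f₁, b * f₂}).radical =
        (Ideal.span {a * f₁, a * f₂, b * f₁, b * f₂}).radical ∧
      (Ideal.span {a * f₁, a * f₂ + b * f₁, b * f₂}).radical =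
        (Ideal.span {f₁, f₂} * Ideal.span {a, b}).radical := by
  refine ⟨radical_three_gens_eq_four a b f₁ f₂, ?_⟩
  rw [radical_three_gens_eq_four, mul_comm (Ideal.span {f₁, f₂}), Ideal.span_pair_mul_span_pair]
end
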